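/- arXiv:2109.04944 — 3 statements merged into one kernel-verified Lean document; each statement's English description precedes it below -/
import Mathlib

section
/- Let ε > 0, let H be a 3-uniform hypergraph, and let X, Y, Z be pairwise disjoint subsets of V(H) with |X| ≥ 2/ε. If d(X,X,Y) ≤ ε²/8 and d(X,X,Z) ≤ ε²/8, then either d(X,Y,Z) ≤ ε, or H contains at least (ε²/16)·|X|²·|Y|·|Z| induced copies of D₂. -/
open Finset

/-- The number of induced copies of `D₂` (4 vertices spanning exactly 2 edges). -/
def inducedD2Count {V : Type} [Fintype V] [DecidableEq V] (E : Finset (Finset V)) : ℕ :=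
  (((Finset.univ : Finset V).powersetCard 4).filter
    (fun S => (E.filter (fun e => e ⊆ S)).card = 2)).card

/-- `e(X,Y,Z)`: the number of edges with one vertex in each of `X`, `Y`, `Z`. -/
def eXYZ {V : Type} [DecidableEq V] (E : Finset (Finset V)) (X Y Z : Finset V) : ℕ :=
  (E.filter (fun e => (e ∩ X).card = 1 ∧ (e ∩ Y).card = 1 ∧ (e ∩ Z).card = 1)).card

/-- `d(X,Y,Z) = e(X,Y,Z) / (|X||Y||Z|)`. -/
noncomputable def dXYZ {V : Type} [DecidableEq V] (E : Finset (Finset V))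
    (X Y Z : Finset V) : ℝ :=
  (eXYZ E X Y Z : ℝ) / ((X.card : ℝ) * (Y.card : ℝ) * (Z.card : ℝ))

/-- `e(X,X,Y)`: the number of edges with two vertices in `X` and one vertex in `Y`. -/
def eXXY {V : Type} [DecidableEq V] (E : Finset (Finset V)) (X Y : Finset V) : ℕ :=
  (E.filter (fun e => (e ∩ X).card = 2 ∧ (e ∩ Y).card = 1)).card

/-- `d(X,X,Y) = e(X,X,Y) / (C(|X|,2)·|Y|)`. -/
noncomputable def dXXY {V : Type} [DecidableEq V] (E : Finset (Finset V))
    (X Y : Finset V) : ℝ :=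
  (eXXY E X Y : ℝ) / ((X.card.choose 2 : ℝ) * (Y.card : ℝ))

/-! Call a pair of edges `yzx`, `yzx'` with `x, x' ∈ X`, `y ∈ Y`, `z ∈ Z` a cherry. Convexity of
`t ↦ t(t - 1)/2`, applied to the degrees of the pairs `yz` into `X`, gives many cherries when
`d(X,Y,Z)` is large. A cherry spans an induced `D₂` unless `yxx'` or `zxx'` is an edge too, and
there are few such cherries when `d(X,X,Y)` and `d(X,X,Z)` are small. -/

theorem filter_subset_eq_image_erase {V : Type*} [DecidableEq V] {E : Finset (Finset V)} {k : ℕ}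
    (hE : ∀ e ∈ E, e.card = k) {S : Finset V} (hS : S.card = k + 1) :
    E.filter (· ⊆ S) = (S.filter (S.erase · ∈ E)).image S.erase := by
  ext e
  simp only [mem_filter, mem_image]
  constructor
  · rintro ⟨he, heS⟩
    obtain ⟨v, hv, rfl⟩ := exists_eq_insert_iff.2 ⟨heS, by rw [hE e he, hS]⟩
    exact ⟨v, ⟨mem_insert_self v e, by rwa [erase_insert hv]⟩, erase_insert hv⟩
  · rintro ⟨v, ⟨-, hv⟩, rfl⟩
    exact ⟨hv, erase_subset v S⟩

theorem card_filter_subset_eq_card_filter_erase {V : Type*} [DecidableEq V]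
    {E : Finset (Finset V)} {k : ℕ} (hE : ∀ e ∈ E, e.card = k) {S : Finset V}
    (hS : S.card = k + 1) :
    (E.filter (· ⊆ S)).card = (S.filter (S.erase · ∈ E)).card := by
  rw [filter_subset_eq_image_erase hE hS]
  exact card_image_of_injOn ((erase_injOn S).mono (coe_subset.2 (filter_subset _ S)))

theorem choose_two_average_mul_card_le_sum_choose_two {ι : Type*} (s : Finset ι) (f : ι → ℕ) {t : ℝ}
    (ht : ((∑ i ∈ s, f i : ℕ) : ℝ) = t * s.card) :
    t * (t - 1) / 2 * s.card ≤ ((∑ i ∈ s, (f i).choose 2 : ℕ) : ℝ) := by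
  push_cast at ht ⊢
  calc t * (t - 1) / 2 * s.card
      = (t - 1 / 2) * ∑ i ∈ s, (f i : ℝ) - s.card * (t ^ 2 / 2) := by rw [ht]; ring
    _ = ∑ i ∈ s, ((t - 1 / 2) * f i - t ^ 2 / 2) := by
      rw [sum_sub_distrib, mul_sum, sum_const, nsmul_eq_mul]
    _ ≤ ∑ i ∈ s, ((f i).choose 2 : ℝ) := by
      gcongr with i
      rw [Nat.cast_choose_two]
      linarith [sq_nonneg ((f i : ℝ) - t)]

theorem filter_erase_mem_insert_insert_eq {V : Type*} [DecidableEq V] {E : Finset (Finset V)}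
    {p : Finset V} {y z : V} (hp : p.card = 2) (hz : z ∉ p) (hy : y ∉ insert z p)
    (hyp : insert y p ∉ E) (hzp : insert z p ∉ E) (hyz : ∀ x ∈ p, {y, z, x} ∈ E) :
    (insert y (insert z p)).filter ((insert y (insert z p)).erase · ∈ E) = p := by
  have hyp' : (insert y (insert z p)).erase z ∉ E := by
    rw [insert_comm, erase_insert]
    · exact hyp
    · rw [mem_insert, not_or] at hy ⊢
      exact ⟨hy.1 ∘ Eq.symm, hz⟩
  have hyz' : ∀ v ∈ p, (insert y (insert z p)).erase v ∈ E := fun v hv => by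
    obtain ⟨x, hx⟩ := card_eq_one.1 ((card_erase_of_mem hv).trans (by rw [hp]))
    have hvz : z ≠ v := fun h => hz (h ▸ hv)
    have hvy : y ≠ v := fun h => hy (h ▸ mem_insert_of_mem hv)
    rw [erase_insert_of_ne hvy, erase_insert_of_ne hvz, hx]
    exact hyz x (mem_of_mem_erase (hx ▸ mem_singleton_self x))
  rw [filter_insert, erase_insert hy, if_neg hzp, filter_insert, if_neg hyp',
    filter_true_of_mem hyz']

section Disjoint

variable {V : Type*} [DecidableEq V] {X Y Z p : Finset V} {y z : V}

theorem insert_inter_eq_of_subset (hXY : Disjoint X Y) (hp : p ⊆ X) (hy : y ∈ Y) :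
    insert y p ∩ X = p := by
  rw [insert_inter_of_notMem (disjoint_right.1 hXY hy), inter_eq_left.2 hp]

theorem insert_inter_eq_singleton (hXY : Disjoint X Y) (hp : p ⊆ X) (hy : y ∈ Y) :
    insert y p ∩ Y = {y} := by
  rw [insert_inter_of_mem hy, disjoint_iff_inter_eq_empty.1 (hXY.mono_left hp), insert_empty]

theorem insert_insert_inter_eq_of_subset (hXY : Disjoint X Y) (hXZ : Disjoint X Z) (hp : p ⊆ X)
    (hy : y ∈ Y) (hz : z ∈ Z) : insert y (insert z p) ∩ X = p := by
  rw [insert_inter_of_notMem (disjoint_right.1 hXY hy), insert_inter_eq_of_subset hXZ hp hz]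

theorem insert_insert_inter_eq_singleton_left (hXY : Disjoint X Y) (hYZ : Disjoint Y Z)
    (hp : p ⊆ X) (hy : y ∈ Y) (hz : z ∈ Z) : insert y (insert z p) ∩ Y = {y} := by
  rw [insert_comm, insert_inter_of_notMem (disjoint_right.1 hYZ hz),
    insert_inter_eq_singleton hXY hp hy]

theorem insert_insert_inter_eq_singleton_right (hXZ : Disjoint X Z) (hYZ : Disjoint Y Z)
    (hp : p ⊆ X) (hy : y ∈ Y) (hz : z ∈ Z) : insert y (insert z p) ∩ Z = {z} := by
  rw [insert_comm, insert_insert_inter_eq_singleton_left hXZ hYZ.symm hp hz hy]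

theorem injOn_insert_insert (hXY : Disjoint X Y) (hXZ : Disjoint X Z) (hYZ : Disjoint Y Z) :
    Set.InjOn (fun a : Finset V × V × V => insert a.2.1 (insert a.2.2 a.1))
      (X.powerset ×ˢ Y ×ˢ Z : Finset (Finset V × V × V)) := by
  rintro ⟨p, y, z⟩ h ⟨p', y', z'⟩ h' heq
  simp only [coe_product, Set.mem_prod, mem_coe, mem_powerset] at h h'
  obtain ⟨hp, hy, hz⟩ := h
  obtain ⟨hp', hy', hz'⟩ := h'
  have hpp' := congrArg (· ∩ X) heq
  have hyy' := congrArg (· ∩ Y) heq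
  have hzz' := congrArg (· ∩ Z) heq
  simp only [insert_insert_inter_eq_of_subset hXY hXZ hp hy hz,
    insert_insert_inter_eq_of_subset hXY hXZ hp' hy' hz'] at hpp'
  simp only [insert_insert_inter_eq_singleton_left hXY hYZ hp hy hz,
    insert_insert_inter_eq_singleton_left hXY hYZ hp' hy' hz', singleton_inj] at hyy'
  simp only [insert_insert_inter_eq_singleton_right hXZ hYZ hp hy hz,
    insert_insert_inter_eq_singleton_right hXZ hYZ hp' hy' hz', singleton_inj] at hzz'
  rw [hpp', hyy', hzz']

theorem notMem_insert_of_subset_of_disjoint (hXY : Disjoint X Y) (hYZ : Disjoint Y Z)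
    (hp : p ⊆ X) (hy : y ∈ Y) (hz : z ∈ Z) : y ∉ insert z p := by
  rw [mem_insert, not_or]
  exact ⟨hYZ.forall_ne_finset hy hz, disjoint_right.1 (hXY.mono_left hp) hy⟩

theorem card_insert_insert_of_subset (hXY : Disjoint X Y) (hXZ : Disjoint X Z)
    (hYZ : Disjoint Y Z) (hp : p ⊆ X) (hy : y ∈ Y) (hz : z ∈ Z) :
    (insert y (insert z p)).card = p.card + 2 := by
  rw [card_insert_of_notMem (notMem_insert_of_subset_of_disjoint hXY hYZ hp hy hz),
    card_insert_of_notMem (disjoint_right.1 (hXZ.mono_left hp) hz)]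

theorem exists_eq_of_card_inter_eq_one (hXY : Disjoint X Y) (hXZ : Disjoint X Z)
    (hYZ : Disjoint Y Z) {e : Finset V} (he : e.card = 3) (heX : (e ∩ X).card = 1)
    (heY : (e ∩ Y).card = 1) (heZ : (e ∩ Z).card = 1) :
    ∃ x ∈ X, ∃ y ∈ Y, ∃ z ∈ Z, ({y, z, x} : Finset V) = e := by
  obtain ⟨x, hx⟩ := card_eq_one.1 heX
  obtain ⟨y, hy⟩ := card_eq_one.1 heY
  obtain ⟨z, hz⟩ := card_eq_one.1 heZ
  obtain ⟨hxe, hxX⟩ := mem_inter.1 (hx ▸ mem_singleton_self x)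
  obtain ⟨hye, hyY⟩ := mem_inter.1 (hy ▸ mem_singleton_self y)
  obtain ⟨hze, hzZ⟩ := mem_inter.1 (hz ▸ mem_singleton_self z)
  refine ⟨x, hxX, y, hyY, z, hzZ, eq_of_subset_of_card_le ?_ ?_⟩
  · simp only [insert_subset_iff, singleton_subset_iff, hxe, hye, hze, and_self]
  · rw [he, card_insert_insert_of_subset hXY hXZ hYZ (singleton_subset_iff.2 hxX) hyY hzZ,
      card_singleton]

end Disjoint

/-- The neighbourhood in `X` of the pair `yz`; its size is the degree of `yz` into `X`. -/
def pairNbhd {V : Type*} [DecidableEq V] (E : Finset (Finset V)) (X : Finset V) (y z : V) :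
    Finset V :=
  X.filter (fun x => {y, z, x} ∈ E)

/-- The cherries, i.e. pairs of edges `yzx`, `yzx'` with `x ≠ x'` in `X`, `y ∈ Y` and `z ∈ Z`,
encoded as `({x, x'}, y, z)`. They are the candidates for induced copies of `D₂`. -/
def cherries {V : Type*} [DecidableEq V] (E : Finset (Finset V)) (X Y Z : Finset V) :
    Finset (Finset V × V × V) :=
  (X.powersetCard 2 ×ˢ Y ×ˢ Z).filter (fun a => a.1 ⊆ pairNbhd E X a.2.1 a.2.2)

section Counting

theorem card_cherries {V : Type*} [DecidableEq V] (E : Finset (Finset V)) (X Y Z : Finset V) :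
    (cherries E X Y Z).card = ∑ q ∈ Y ×ˢ Z, (pairNbhd E X q.1 q.2).card.choose 2 := by
  rw [cherries, card_filter, sum_product_right]
  refine sum_congr rfl fun q _ => ?_
  rw [← card_filter, ← card_powersetCard]
  congr 1
  ext p
  simp only [mem_filter, mem_powersetCard]
  exact ⟨fun h => ⟨h.2, h.1.2⟩, fun h => ⟨⟨h.1.trans (filter_subset _ X), h.2⟩, h.1⟩⟩

variable {V : Type} [DecidableEq V] {E : Finset (Finset V)} {X Y Z : Finset V}

theorem eXYZ_eq_sum_card_pairNbhd (hE : ∀ e ∈ E, e.card = 3) (hXY : Disjoint X Y)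
    (hXZ : Disjoint X Z) (hYZ : Disjoint Y Z) :
    eXYZ E X Y Z = ∑ q ∈ Y ×ˢ Z, (pairNbhd E X q.1 q.2).card := by
  simp only [pairNbhd, card_filter]
  rw [← sum_product_right', ← card_filter, eXYZ]
  symm
  refine card_nbij (fun a => {a.2.1, a.2.2, a.1}) ?_ ?_ ?_
  · rintro ⟨x, y, z⟩ h
    simp only [coe_filter, Set.mem_ofPred_eq, mem_product] at h
    obtain ⟨⟨hx, hy, hz⟩, he⟩ := h
    have hxX := singleton_subset_iff.2 hx
    simp only [coe_filter, Set.mem_ofPred_eq, he, card_singleton, and_self,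
      insert_insert_inter_eq_of_subset hXY hXZ hxX hy hz,
      insert_insert_inter_eq_singleton_left hXY hYZ hxX hy hz,
      insert_insert_inter_eq_singleton_right hXZ hYZ hxX hy hz]
  · rintro ⟨x, y, z⟩ h ⟨x', y', z'⟩ h' heq
    have singleton_mem : ∀ {x y z}, (x, y, z) ∈ X ×ˢ Y ×ˢ Z →
        (({x}, y, z) : Finset V × V × V) ∈ X.powerset ×ˢ Y ×ˢ Z := fun h => by
      simpa only [mem_product, mem_powerset, singleton_subset_iff] using h
    have hsingleton := injOn_insert_insert hXY hXZ hYZ (singleton_mem (mem_filter.1 h).1)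
      (singleton_mem (mem_filter.1 h').1) heq
    simpa only [Prod.mk.injEq, singleton_inj] using hsingleton
  · intro e he
    obtain ⟨he, heX, heY, heZ⟩ := mem_filter.1 he
    obtain ⟨x, hx, y, hy, z, hz, rfl⟩ :=
      exists_eq_of_card_inter_eq_one hXY hXZ hYZ (hE e he) heX heY heZ
    have hxyz : (x, y, z) ∈ X ×ˢ Y ×ˢ Z := mem_product.2 ⟨hx, mem_product.2 ⟨hy, hz⟩⟩
    exact ⟨(x, y, z), mem_coe.2 (mem_filter.2 ⟨hxyz, he⟩), rfl⟩

theorem card_filter_insert_mem_le_eXXY (hXY : Disjoint X Y) :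
    ((X.powersetCard 2 ×ˢ Y).filter (fun a => insert a.2 a.1 ∈ E)).card ≤ eXXY E X Y := by
  refine card_le_card_of_injOn (fun a => insert a.2 a.1) ?_ ?_
  · rintro ⟨p, y⟩ h
    simp only [coe_filter, Set.mem_ofPred_eq, mem_product, mem_powersetCard] at h ⊢
    obtain ⟨⟨⟨hp, hp2⟩, hy⟩, he⟩ := h
    rw [insert_inter_eq_of_subset hXY hp hy, insert_inter_eq_singleton hXY hp hy]
    exact ⟨he, hp2, card_singleton y⟩
  · rintro ⟨p, y⟩ h ⟨p', y'⟩ h' heq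
    simp only [coe_filter, Set.mem_ofPred_eq, mem_product, mem_powersetCard] at h h'
    obtain ⟨⟨⟨hp, -⟩, hy⟩, -⟩ := h
    obtain ⟨⟨⟨hp', -⟩, hy'⟩, -⟩ := h'
    have hpp' := congrArg (· ∩ X) heq
    have hyy' := congrArg (· ∩ Y) heq
    simp only [insert_inter_eq_of_subset hXY hp hy, insert_inter_eq_of_subset hXY hp' hy'] at hpp'
    simp only [insert_inter_eq_singleton hXY hp hy, insert_inter_eq_singleton hXY hp' hy',
      singleton_inj] at hyy'
    rw [hpp', hyy']

theorem card_cherries_filter_left_le (hXY : Disjoint X Y) :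
    ((cherries E X Y Z).filter (fun a => insert a.2.1 a.1 ∈ E)).card ≤ eXXY E X Y * Z.card := by
  refine le_trans ?_ (Nat.mul_le_mul_right _ (card_filter_insert_mem_le_eXXY hXY))
  rw [← card_product]
  refine card_le_card_of_injOn (fun a => ((a.1, a.2.1), a.2.2)) ?_ ?_
  · rintro ⟨p, y, z⟩ h
    simp only [cherries, coe_filter, coe_product, Set.mem_prod, Set.mem_ofPred_eq, mem_filter,
      mem_product, mem_coe] at h ⊢
    exact ⟨⟨⟨h.1.1.1, h.1.1.2.1⟩, h.2⟩, h.1.1.2.2⟩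
  · rintro ⟨p, y, z⟩ - ⟨p', y', z'⟩ - heq
    simpa only [Prod.mk.injEq, and_assoc] using heq

theorem card_cherries_filter_right_le (hXZ : Disjoint X Z) :
    ((cherries E X Y Z).filter (fun a => insert a.2.2 a.1 ∈ E)).card ≤ eXXY E X Z * Y.card := by
  refine le_trans ?_ (Nat.mul_le_mul_right _ (card_filter_insert_mem_le_eXXY hXZ))
  rw [← card_product]
  refine card_le_card_of_injOn (fun a => ((a.1, a.2.2), a.2.1)) ?_ ?_
  · rintro ⟨p, y, z⟩ h
    simp only [cherries, coe_filter, coe_product, Set.mem_prod, Set.mem_ofPred_eq, mem_filter,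
      mem_product, mem_coe] at h ⊢
    exact ⟨⟨⟨h.1.1.1, h.1.1.2.2⟩, h.2⟩, h.1.1.2.1⟩
  · rintro ⟨p, y, z⟩ - ⟨p', y', z'⟩ - heq
    simp only [Prod.mk.injEq] at heq ⊢
    exact ⟨heq.1.1, heq.2, heq.1.2⟩

theorem card_cherries_filter_not_le [Fintype V] (hE : ∀ e ∈ E, e.card = 3) (hXY : Disjoint X Y)
    (hXZ : Disjoint X Z) (hYZ : Disjoint Y Z) :
    ((cherries E X Y Z).filter
      (fun a => ¬ (insert a.2.1 a.1 ∈ E ∨ insert a.2.2 a.1 ∈ E))).card ≤ inducedD2Count E := by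
  refine card_le_card_of_injOn (fun a => insert a.2.1 (insert a.2.2 a.1)) ?_ ?_
  · rintro ⟨p, y, z⟩ h
    simp only [cherries, coe_filter, Set.mem_ofPred_eq, mem_filter, mem_product,
      mem_powersetCard, not_or] at h ⊢
    obtain ⟨⟨⟨⟨hp, hp2⟩, hy, hz⟩, hyz⟩, hyp, hzp⟩ := h
    have hS : (insert y (insert z p)).card = 3 + 1 := by
      rw [card_insert_insert_of_subset hXY hXZ hYZ hp hy hz, hp2]
    refine ⟨⟨subset_univ _, hS⟩, ?_⟩
    rw [card_filter_subset_eq_card_filter_erase hE hS]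
    rw [filter_erase_mem_insert_insert_eq hp2 (disjoint_right.1 (hXZ.mono_left hp) hz)
      (notMem_insert_of_subset_of_disjoint hXY hYZ hp hy hz) hyp hzp
      fun x hx => (mem_filter.1 (hyz hx)).2, hp2]
  · refine (injOn_insert_insert hXY hXZ hYZ).mono ?_
    rintro ⟨p, y, z⟩ h
    simp only [cherries, coe_filter, Set.mem_ofPred_eq, mem_filter, mem_product, mem_powersetCard,
      mem_coe, mem_powerset] at h ⊢
    exact ⟨h.1.1.1.1, h.1.1.2⟩

theorem card_cherries_le [Fintype V] (hE : ∀ e ∈ E, e.card = 3) (hXY : Disjoint X Y)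
    (hXZ : Disjoint X Z) (hYZ : Disjoint Y Z) :
    (cherries E X Y Z).card ≤
      eXXY E X Y * Z.card + eXXY E X Z * Y.card + inducedD2Count E := by
  rw [← card_filter_add_card_filter_not
    (fun a : Finset V × V × V => insert a.2.1 a.1 ∈ E ∨ insert a.2.2 a.1 ∈ E), filter_or]
  gcongr
  · exact (card_union_le _ _).trans
      (add_le_add (card_cherries_filter_left_le hXY) (card_cherries_filter_right_le hXZ))
  · exact card_cherries_filter_not_le hE hXY hXZ hYZ

end Counting

section Density

variable {V : Type} [DecidableEq V] (E : Finset (Finset V)) (X Y Z : Finset V)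

theorem eXYZ_eq_dXYZ_mul :
    (eXYZ E X Y Z : ℝ) = dXYZ E X Y Z * (X.card * Y.card * Z.card) := by
  refine (div_mul_cancel_of_imp fun h => ?_).symm
  simp only [mul_eq_zero, Nat.cast_eq_zero, card_eq_zero] at h
  rcases h with (rfl | rfl) | rfl <;>
    simp only [eXYZ, inter_empty, card_empty, zero_ne_one, false_and, and_false, filter_false,
      Nat.cast_zero]

theorem eXXY_eq_dXXY_mul :
    (eXXY E X Y : ℝ) = dXXY E X Y * (X.card.choose 2 * Y.card) := by
  refine (div_mul_cancel_of_imp fun h => ?_).symm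
  rw [Nat.cast_eq_zero, eXXY, card_eq_zero, filter_eq_empty_iff]
  rintro e - ⟨heX, heY⟩
  rw [mul_eq_zero, Nat.cast_eq_zero, Nat.cast_eq_zero, Nat.choose_eq_zero_iff] at h
  have hX := card_le_card (inter_subset_right : e ∩ X ⊆ X)
  have hY := card_le_card (inter_subset_right : e ∩ Y ⊆ Y)
  omega

end Density

theorem choose_two_density_sub_le_inducedD2Count {V : Type} [Fintype V] [DecidableEq V]
    {E : Finset (Finset V)} (hE : ∀ e ∈ E, e.card = 3) {X Y Z : Finset V}
    (hXY : Disjoint X Y) (hXZ : Disjoint X Z) (hYZ : Disjoint Y Z) :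
    (dXYZ E X Y Z * X.card * (dXYZ E X Y Z * X.card - 1) / 2 -
      (dXXY E X Y + dXXY E X Z) * X.card.choose 2) * (Y.card * Z.card) ≤
        (inducedD2Count E : ℝ) := by
  have hdeg : ((∑ q ∈ Y ×ˢ Z, (pairNbhd E X q.1 q.2).card : ℕ) : ℝ) =
      dXYZ E X Y Z * X.card * (Y ×ˢ Z).card := by
    rw [← eXYZ_eq_sum_card_pairNbhd hE hXY hXZ hYZ, eXYZ_eq_dXYZ_mul, card_product]
    push_cast
    ring
  have hlower := choose_two_average_mul_card_le_sum_choose_two _ _ hdeg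
  have hupper : ((cherries E X Y Z).card : ℝ) ≤
      eXXY E X Y * Z.card + eXXY E X Z * Y.card + inducedD2Count E :=
    mod_cast card_cherries_le hE hXY hXZ hYZ
  rw [← card_cherries, card_product, Nat.cast_mul] at hlower
  rw [eXXY_eq_dXXY_mul, eXXY_eq_dXXY_mul] at hupper
  linarith

theorem pairs_to_triple_sparse {V : Type} [Fintype V] [DecidableEq V]
    (E : Finset (Finset V)) (hE : ∀ e ∈ E, e.card = 3)
    (ε : ℝ) (hε : 0 < ε) (X Y Z : Finset V)
    (hXY : Disjoint X Y) (hXZ : Disjoint X Z) (hYZ : Disjoint Y Z)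
    (hX : (X.card : ℝ) ≥ 2 / ε)
    (h1 : dXXY E X Y ≤ ε ^ 2 / 8) (h2 : dXXY E X Z ≤ ε ^ 2 / 8) :
    dXYZ E X Y Z ≤ ε ∨
    (inducedD2Count E : ℝ) ≥
      ε ^ 2 / 16 * (X.card : ℝ) ^ 2 * (Y.card : ℝ) * (Z.card : ℝ) := by
  rw [or_iff_not_imp_left, not_le]
  intro hd
  have hcount := choose_two_density_sub_le_inducedD2Count hE hXY hXZ hYZ
  have ht : 2 ≤ ε * X.card := by rwa [ge_iff_le, div_le_iff₀' hε] at hX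
  have hδ : ε * X.card ≤ dXYZ E X Y Z * X.card := by gcongr
  have hpairs : (dXXY E X Y + dXXY E X Z) * X.card.choose 2 ≤ ε ^ 2 / 4 * (X.card ^ 2 / 2) := by
    have hchoose : (X.card.choose 2 : ℝ) ≤ X.card ^ 2 / 2 := by
      simpa only [Nat.factorial_two, Nat.cast_two] using Nat.choose_le_pow_div (α := ℝ) 2 X.card
    gcongr
    linarith
  have hconvex : (ε * X.card) ^ 2 / 4 ≤
      dXYZ E X Y Z * X.card * (dXYZ E X Y Z * X.card - 1) / 2 := by
    nlinarith
  have hcoeff : ε ^ 2 / 16 * (X.card : ℝ) ^ 2 ≤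
      dXYZ E X Y Z * X.card * (dXYZ E X Y Z * X.card - 1) / 2 -
        (dXXY E X Y + dXXY E X Z) * X.card.choose 2 := by
    linarith [sq_nonneg (ε * X.card)]
  calc ε ^ 2 / 16 * (X.card : ℝ) ^ 2 * Y.card * Z.card
      = ε ^ 2 / 16 * (X.card : ℝ) ^ 2 * (Y.card * Z.card) := by ring
    _ ≤ _ := by gcongr
    _ ≤ inducedD2Count E := hcount
end

section
/- Let γ > 0, let H be a 3-uniform hypergraph on n vertices, let v ∈ V(H), and let X, Y, Z ⊆ V(H) \ {v} be pairwise disjoint with |X|, |Y| ≥ 2/γ. Suppose d_{L(v)}(X,Z) ≥ 1 − γ²/80, d_{L(v)}(Y,Z) ≤ γ²/80, and d_{L(v)}(X,Y) ≥ 1 − γ²/80. Then one of the following holds: (1) d(X,X,Y) ≥ 1 − γ and d(Y,Y,X) ≥ 1 − γ; (2) H contains at least (γ²/128)·min{|X|²|Y||Z|, |X||Y|²|Z|, |X|²|Y|²} induced copies of D₂; (3) H contains at least (γ²/128)·(1/n)·min{|X|²|Y||Z|, |X||Y|²|Z|} induced copies of D₂ which contain v. -/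
open Finset

/-- The number of induced copies of `D₂` which contain the vertex `v`. -/
def inducedD2CountVia {V : Type} [Fintype V] [DecidableEq V]
    (E : Finset (Finset V)) (v : V) : ℕ :=
  (((Finset.univ : Finset V).powersetCard 4).filter
    (fun S => v ∈ S ∧ (E.filter (fun e => e ⊆ S)).card = 2)).card

/-- The number of edges of the link graph of `v` between disjoint sets `A` and `B`:
pairs `(a,b) ∈ A × B` with `{v,a,b}` a hyperedge. -/
def eLink {V : Type} [DecidableEq V] (E : Finset (Finset V)) (v : V) (A B : Finset V) : ℕ :=
  ((A ×ˢ B).filter (fun p => ({v, p.1, p.2} : Finset V) ∈ E)).card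

/-- The density of the link graph of `v` between disjoint sets `A` and `B`. -/
noncomputable def dLink {V : Type} [DecidableEq V] (E : Finset (Finset V)) (v : V)
    (A B : Finset V) : ℝ :=
  (eLink E v A B : ℝ) / ((A.card : ℝ) * (B.card : ℝ))

/-!
Call `(x, y, z) ∈ X × Y × Z` typical if `{v, y, z}` is the only non-edge on `{v, x, y, z}`. The
densities of the link graph make all but few triples typical, up to copies of `D₂` through `v`.
If `(x, y, z)` and `(x, y', z)` are typical and `{x, y, y'}` is not an edge, then one of
`{x, y, y', z}`, `{v, x, y, y'}`, `{v, y, y', z}` induces a copy of `D₂`; so when `D₂` is rare, few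
of the triples counted by `e(Y,Y,X)` are missing. If many of those counted by `e(X,X,Y)` were
missing, convexity would give many pairs `Q ⊆ X`, `P ⊆ Y` such that `Q ∪ {y}` is missing for both
`y ∈ P`; then `P ∪ Q` induces a copy of `D₂` unless one of the few missing triples `P ∪ {x}` lies
in `P ∪ Q`.
-/

lemma card_mul_choose_two_le_sum {ι : Type*} {s : Finset ι} {m : ι → ℕ} {t : ℝ} (ht : 1 / 2 ≤ t)
    (h : #s * t ≤ ∑ i ∈ s, (m i : ℝ)) :
    #s * (t * (t - 1) / 2) ≤ ∑ i ∈ s, ((m i).choose 2 : ℝ) := by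
  have tangent (i : ι) : ((2 * t - 1) * m i - t ^ 2) / 2 ≤ ((m i).choose 2 : ℝ) := by
    rw [Nat.cast_choose_two]
    linarith [sq_nonneg ((m i : ℝ) - t)]
  calc #s * (t * (t - 1) / 2)
      = ((2 * t - 1) * (#s * t) - #s * t ^ 2) / 2 := by ring
    _ ≤ ((2 * t - 1) * ∑ i ∈ s, (m i : ℝ) - #s * t ^ 2) / 2 := by
        gcongr
        linarith
    _ = ∑ i ∈ s, ((2 * t - 1) * m i - t ^ 2) / 2 := by
        rw [← sum_div, sum_sub_distrib, ← mul_sum, sum_const, nsmul_eq_mul]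
    _ ≤ ∑ i ∈ s, ((m i).choose 2 : ℝ) := sum_le_sum fun i _ => tangent i

lemma sq_div_four_le_choose_two {n : ℕ} (hn : 2 ≤ n) : (n : ℝ) ^ 2 / 4 ≤ (n.choose 2 : ℝ) := by
  have hn' : (2 : ℝ) ≤ n := by exact_mod_cast hn
  rw [Nat.cast_choose_two]
  nlinarith

lemma card_image_product_le {α β γ : Type*} [DecidableEq γ] (f : α × β → γ) (s : Finset α)
    (t : Finset β) : #((s ×ˢ t).image f) ≤ #s * #t :=
  card_image_le.trans (card_product s t).le

section Hypergraph

variable {V : Type*} [DecidableEq V] {E : Finset (Finset V)} {v : V} {X Y Z : Finset V}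

lemma union_eq_union_iff_of_disjoint (hXY : Disjoint X Y) {P P' Q Q' : Finset V} (hP : P ⊆ X)
    (hP' : P' ⊆ X) (hQ : Q ⊆ Y) (hQ' : Q' ⊆ Y) : P ∪ Q = P' ∪ Q' ↔ P = P' ∧ Q = Q' := by
  have union_inter {A B P Q : Finset V} (hAB : Disjoint A B) (hP : P ⊆ A) (hQ : Q ⊆ B) :
      (P ∪ Q) ∩ A = P := by
    rw [union_inter_distrib_right, inter_eq_left.mpr hP,
      disjoint_iff_inter_eq_empty.mp (hAB.symm.mono_left hQ), union_empty]
  refine ⟨fun h => ⟨?_, ?_⟩, fun ⟨hP, hQ⟩ => by rw [hP, hQ]⟩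
  · rw [← union_inter hXY hP hQ, h, union_inter hXY hP' hQ']
  · rw [← union_inter hXY.symm hQ hP, union_comm, h, union_comm, union_inter hXY.symm hQ' hP']

lemma insert_eq_insert_iff_of_disjoint (hXY : Disjoint X Y) {P P' : Finset V} {y y' : V}
    (hP : P ⊆ X) (hP' : P' ⊆ X) (hy : y ∈ Y) (hy' : y' ∈ Y) :
    insert y P = insert y' P' ↔ P = P' ∧ y = y' := by
  rw [← union_singleton, ← union_singleton, union_eq_union_iff_of_disjoint hXY hP hP'
    (singleton_subset_iff.mpr hy) (singleton_subset_iff.mpr hy'), singleton_inj]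

lemma injOn_insert_insert_of_disjoint (hXY : Disjoint X Y) (hXZ : Disjoint X Z)
    (hYZ : Disjoint Y Z) :
    Set.InjOn (fun t : (Finset V × V) × V => insert t.2 (insert t.1.2 t.1.1))
      ((X.powerset ×ˢ Y) ×ˢ Z : Finset _) := by
  rintro ⟨⟨P, y⟩, z⟩ h ⟨⟨P', y'⟩, z'⟩ h' heq
  simp only [mem_coe, mem_product, mem_powerset] at h h' heq
  have hXYZ : Disjoint (X ∪ Y) Z := disjoint_union_left.mpr ⟨hXZ, hYZ⟩
  rw [insert_eq_insert_iff_of_disjoint hXYZ (by grind) (by grind) h.2 h'.2,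
    insert_eq_insert_iff_of_disjoint hXY h.1.1 h'.1.1 h.1.2 h'.1.2] at heq
  grind

lemma injOn_triple_of_disjoint (hXY : Disjoint X Y) (hXZ : Disjoint X Z) (hYZ : Disjoint Y Z) :
    Set.InjOn (fun t : V × V × V => ({t.1, t.2.1, t.2.2} : Finset V)) (X ×ˢ Y ×ˢ Z : Finset _) := by
  rintro ⟨x, y, z⟩ h ⟨x', y', z'⟩ h' heq
  simp only [mem_coe, mem_product] at h h' heq
  have hYZX : Disjoint (Y ∪ Z) X := disjoint_union_left.mpr ⟨hXY.symm, hXZ.symm⟩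
  rw [insert_eq_insert_iff_of_disjoint hYZX (by grind) (by grind) h.1 h'.1,
    insert_eq_insert_iff_of_disjoint hYZ.symm (by grind) (by grind) h.2.1 h'.2.1,
    singleton_inj] at heq
  grind

/-- `S` induces a copy of `D₂` in the hypergraph with edge set `E`. -/
abbrev IsD2 (E : Finset (Finset V)) (S : Finset V) : Prop :=
  #S = 4 ∧ #{e ∈ E | e ⊆ S} = 2

/-- The pairs `(P, y)` for which `P ∪ {y}` is a non-edge with two vertices in `X` and one in `Y`;
for disjoint `X` and `Y` these are the triples missing from `e(X,X,Y)`. -/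
def missingXXY (E : Finset (Finset V)) (X Y : Finset V) : Finset (Finset V × V) :=
  {t ∈ X.powersetCard 2 ×ˢ Y | insert t.2 t.1 ∉ E}

lemma card_missingXXY_eq_sum :
    #(missingXXY E X Y) = ∑ Q ∈ X.powersetCard 2, #{y ∈ Y | insert y Q ∉ E} := by
  simp only [missingXXY, card_filter, sum_product]

/-- The pairs of `A × B` that are not edges of the link graph of `v`. -/
def missingLink (E : Finset (Finset V)) (v : V) (A B : Finset V) : Finset (V × V) :=
  {t ∈ A ×ˢ B | {v, t.1, t.2} ∉ E}

/-- On the vertices `v, x, y, z` the only non-edge is `{v, y, z}`. -/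
abbrev IsTypical (E : Finset (Finset V)) (v x y z : V) : Prop :=
  {v, x, y} ∈ E ∧ {v, x, z} ∈ E ∧ {v, y, z} ∉ E ∧ {x, y, z} ∈ E

/-- The triples of `X × Y × Z` that are not typical with respect to `v`. -/
def atypicalTriples (E : Finset (Finset V)) (v : V) (X Y Z : Finset V) : Finset (V × V × V) :=
  {t ∈ X ×ˢ Y ×ˢ Z | ¬ IsTypical E v t.1 t.2.1 t.2.2}

lemma distinct_of_mem (hE : ∀ e ∈ E, #e = 3) {a b c : V} (h : {a, b, c} ∈ E) :
    a ≠ b ∧ a ≠ c ∧ b ≠ c := by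
  have h3 := hE _ h
  refine ⟨?_, ?_, ?_⟩ <;> rintro rfl <;> grind [card_le_two]

lemma triple_rotate (a b c : V) : ({a, b, c} : Finset V) = {b, c, a} := by
  rw [insert_comm, pair_comm a]

lemma isD2_of_mem_of_notMem (hE : ∀ e ∈ E, #e = 3) {a b c d : V} (hcd : c ≠ d)
    (habc : {a, b, c} ∈ E) (habd : {a, b, d} ∈ E) (hacd : {a, c, d} ∉ E)
    (hbcd : {b, c, d} ∉ E) : IsD2 E {a, b, c, d} := by
  obtain ⟨hab, hac, hbc⟩ := distinct_of_mem hE habc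
  obtain ⟨-, had, hbd⟩ := distinct_of_mem hE habd
  have h4 : #{a, b, c, d} = 4 := by simp [*]
  have hedges : {e ∈ E | e ⊆ {a, b, c, d}} = {{a, b, c}, {a, b, d}} := by
    ext e
    simp only [mem_filter, mem_insert, mem_singleton]
    constructor
    · rintro ⟨he, hsub⟩
      obtain ⟨w, hwe, hw⟩ := exists_eq_insert_iff.mpr ⟨hsub, by rw [hE e he, h4]⟩
      obtain rfl : Finset.erase {a, b, c, d} w = e := by rw [← hw, erase_insert hwe]
      have hw : w ∈ ({a, b, c, d} : Finset V) := hw ▸ mem_insert_self w _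
      simp only [mem_insert, mem_singleton] at hw
      rcases hw with rfl | rfl | rfl | rfl
      · exact absurd he (by simp [*])
      · exact absurd he (by simp [erase_insert_of_ne, *])
      · right
        simp [erase_insert_of_ne, *]
      · left
        simp [erase_insert_of_ne, *]
    · rintro (rfl | rfl)
      · exact ⟨habc, by simp [insert_subset_iff]⟩
      · exact ⟨habd, by simp [insert_subset_iff]⟩
  refine ⟨h4, ?_⟩
  rw [hedges, card_pair]
  intro h
  have := congrArg (c ∈ ·) h
  simp [hac.symm, hbc.symm, hcd] at this

lemma isD2_of_isTypical (hE : ∀ e ∈ E, #e = 3) {x y y' z : V} (hyy' : y ≠ y')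
    (hy : IsTypical E v x y z) (hy' : IsTypical E v x y' z) (hx : {x, y, y'} ∉ E) :
    IsD2 E {z, x, y, y'} ∨ IsD2 E {v, x, y, y'} ∨ IsD2 E {v, z, y, y'} := by
  obtain ⟨hvxy, hvxz, hvyz, hxyz⟩ := hy
  obtain ⟨hvxy', -, hvyz', hxyz'⟩ := hy'
  by_cases hvyy' : {v, y, y'} ∈ E
  · by_cases hzyy' : {z, y, y'} ∈ E
    · have hvz := (distinct_of_mem hE hvxz).2.1
      have h : IsD2 E {y, y', v, z} := by
        refine isD2_of_mem_of_notMem hE hvz ?_ ?_ ?_ ?_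
        · rwa [← triple_rotate]
        · rwa [← triple_rotate]
        · rwa [insert_comm]
        · rwa [insert_comm]
      have hset : ({y, y', v, z} : Finset V) = {v, z, y, y'} := by grind
      exact .inr (.inr (hset ▸ h))
    · left
      refine isD2_of_mem_of_notMem hE hyy' ?_ ?_ hzyy' hx
      · rwa [triple_rotate]
      · rwa [triple_rotate]
  · exact .inr (.inl (isD2_of_mem_of_notMem hE hyy' hvxy hvxy' hvyy' hx))

lemma exists_not_isTypical_or_isD2_of_notMem (hE : ∀ e ∈ E, #e = 3) {x z : V} {P : Finset V}
    (hP : #P = 2) (hx : insert x P ∉ E) :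
    (∃ p q, P = {p, q} ∧ ¬ IsTypical E v x p z) ∨ IsD2 E (insert z (insert x P)) ∨
      IsD2 E (insert v (insert x P)) ∨ IsD2 E (insert v (insert z P)) := by
  obtain ⟨y, y', hyy', rfl⟩ := card_eq_two.mp hP
  by_cases hy : IsTypical E v x y z
  · by_cases hy' : IsTypical E v x y' z
    · exact .inr (isD2_of_isTypical hE hyy' hy hy' hx)
    · exact .inl ⟨y', y, pair_comm y y', hy'⟩
  · exact .inl ⟨y, y', rfl, hy⟩

lemma isD2_union_or_exists_notMem (hE : ∀ e ∈ E, #e = 3) {P Q : Finset V} (hP : #P = 2)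
    (hQ : #Q = 2) (h : ∀ y ∈ P, insert y Q ∉ E) :
    IsD2 E (P ∪ Q) ∨ ∃ p q, Q = {p, q} ∧ insert p P ∉ E := by
  obtain ⟨y, y', -, rfl⟩ := card_eq_two.mp hP
  obtain ⟨x, x', hxx', rfl⟩ := card_eq_two.mp hQ
  by_cases hx : {x, y, y'} ∈ E
  · by_cases hx' : {x', y, y'} ∈ E
    · left
      rw [triple_rotate] at hx hx'
      rw [insert_union, singleton_union]
      exact isD2_of_mem_of_notMem hE hxx' hx hx' (h y (by simp)) (h y' (by simp))
    · exact .inr ⟨x', x, pair_comm x x', hx'⟩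
  · exact .inr ⟨x, x', rfl, hx⟩

end Hypergraph

section Counting

variable {V : Type} [Fintype V] [DecidableEq V] {E : Finset (Finset V)} {v : V} {X Y Z : Finset V}

lemma card_le_inducedD2Count {ι : Type*} {s : Finset ι} {f : ι → Finset V} (hf : Set.InjOn f s)
    (h : ∀ i ∈ s, IsD2 E (f i)) : #s ≤ inducedD2Count E := by
  refine card_le_card_of_injOn f (fun i hi => ?_) hf
  simpa [mem_powersetCard] using h i hi

lemma card_le_inducedD2CountVia {ι : Type*} {s : Finset ι} {f : ι → Finset V}
    (hf : Set.InjOn f s) (hcard : ∀ i ∈ s, #(f i) ≤ 3) (h : ∀ i ∈ s, IsD2 E (insert v (f i))) :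
    #s ≤ inducedD2CountVia E v := by
  have hv : ∀ i ∈ s, v ∉ f i := by
    intro i hi hmem
    have := (h i hi).1
    rw [insert_eq_self.mpr hmem] at this
    have := hcard i hi
    omega
  refine card_le_card_of_injOn (fun i => insert v (f i)) (fun i hi => ?_) fun i hi j hj hij => ?_
  · simpa [mem_powersetCard] using h i hi
  · exact hf hi hj ((insert_erase_invOn.2.injOn).eq_iff (hv i hi) (hv j hj) |>.mp hij)

/-- The pairs `(P, a)` with `P` a pair in `Y`, `a ∈ A` and `P ∪ {a, v}` inducing a copy of `D₂`. -/
def d2PairsVia (E : Finset (Finset V)) (v : V) (Y A : Finset V) : Finset (Finset V × V) :=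
  {t ∈ Y.powersetCard 2 ×ˢ A | IsD2 E (insert v (insert t.2 t.1))}

lemma card_d2PairsVia_le (hYX : Disjoint Y X) : #(d2PairsVia E v Y X) ≤ inducedD2CountVia E v := by
  have hmem : ∀ t ∈ d2PairsVia E v Y X, t.1 ⊆ Y ∧ #t.1 = 2 ∧ t.2 ∈ X := fun t ht => by
    simpa [mem_powersetCard, and_assoc] using (mem_filter.mp ht).1
  refine card_le_inducedD2CountVia (f := fun t => insert t.2 t.1) (fun t ht t' ht' h => ?_)
    (fun t ht => ?_) fun t ht => (mem_filter.mp ht).2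
  · obtain ⟨htY, -, htX⟩ := hmem t ht
    obtain ⟨htY', -, htX'⟩ := hmem t' ht'
    exact Prod.ext_iff.mpr ((insert_eq_insert_iff_of_disjoint hYX htY htY' htX htX').mp h)
  · exact (card_insert_le _ _).trans (by rw [(hmem t ht).2.1])

lemma card_atypicalTriples_le (hE : ∀ e ∈ E, #e = 3) (hXY : Disjoint X Y) (hXZ : Disjoint X Z)
    (hYZ : Disjoint Y Z) :
    #(atypicalTriples E v X Y Z) ≤ #(missingLink E v X Y) * #Z + #(missingLink E v X Z) * #Y +
      eLink E v Y Z * #X + inducedD2CountVia E v := by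
  let missingXY := (missingLink E v X Y ×ˢ Z).image fun t => (t.1.1, t.1.2, t.2)
  let missingXZ := (missingLink E v X Z ×ˢ Y).image fun t => (t.1.1, t.2, t.1.2)
  let linkYZ := ({t ∈ Y ×ˢ Z | {v, t.1, t.2} ∈ E} ×ˢ X).image fun t => (t.2, t.1.1, t.1.2)
  let d2 := {t ∈ X ×ˢ Y ×ˢ Z | IsD2 E {v, t.1, t.2.1, t.2.2}}
  have hcover : atypicalTriples E v X Y Z ⊆ missingXY ∪ missingXZ ∪ linkYZ ∪ d2 := by
    rintro ⟨x, y, z⟩ ht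
    simp only [atypicalTriples, mem_filter, mem_product] at ht
    obtain ⟨⟨hx, hy, hz⟩, htyp⟩ := ht
    simp only [mem_union]
    by_cases hvxy : {v, x, y} ∈ E
    · by_cases hvxz : {v, x, z} ∈ E
      · by_cases hvyz : {v, y, z} ∈ E
        · exact .inl (.inr (mem_image.mpr
            ⟨((y, z), x), mem_product.mpr ⟨mem_filter.mpr ⟨by simp [*], hvyz⟩, hx⟩, rfl⟩))
        · have hxyz : {x, y, z} ∉ E := fun h => htyp ⟨hvxy, hvxz, hvyz, h⟩
          exact .inr (mem_filter.mpr ⟨by simp [*],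
            isD2_of_mem_of_notMem hE (hYZ.forall_ne_finset hy hz) hvxy hvxz hvyz hxyz⟩)
      · exact .inl (.inl (.inr (mem_image.mpr
          ⟨((x, z), y), mem_product.mpr ⟨mem_filter.mpr ⟨by simp [*], hvxz⟩, hy⟩, rfl⟩)))
    · exact .inl (.inl (.inl (mem_image.mpr
        ⟨((x, y), z), mem_product.mpr ⟨mem_filter.mpr ⟨by simp [*], hvxy⟩, hz⟩, rfl⟩)))
  have hd2 : #d2 ≤ inducedD2CountVia E v :=
    card_le_inducedD2CountVia
      ((injOn_triple_of_disjoint hXY hXZ hYZ).mono (filter_subset _ _))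
      (fun _ _ => card_le_three) fun t ht => (mem_filter.mp ht).2
  calc #(atypicalTriples E v X Y Z) ≤ #(missingXY ∪ missingXZ ∪ linkYZ ∪ d2) := card_le_card hcover
    _ ≤ #missingXY + #missingXZ + #linkYZ + #d2 := by grind [card_union_le]
    _ ≤ _ := by
        gcongr
        all_goals exact card_image_product_le _ _ _

lemma card_missingXXY_mul_card_le (hE : ∀ e ∈ E, #e = 3) (hXY : Disjoint X Y) (hXZ : Disjoint X Z)
    (hYZ : Disjoint Y Z) :
    #(missingXXY E Y X) * #Z ≤ #(atypicalTriples E v X Y Z) * #Y + inducedD2Count E +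
      (#X + #Z) * inducedD2CountVia E v := by
  let atypical := (atypicalTriples E v X Y Z ×ˢ Y).image fun t : (V × V × V) × V =>
    ((({t.1.2.1, t.2} : Finset V), t.1.1), t.1.2.2)
  let d2 := {t ∈ (Y.powersetCard 2 ×ˢ X) ×ˢ Z | IsD2 E (insert t.2 (insert t.1.2 t.1.1))}
  let d2Z := (d2PairsVia E v Y Z ×ˢ X).image fun t => ((t.1.1, t.2), t.1.2)
  have hcover : missingXXY E Y X ×ˢ Z ⊆ atypical ∪ d2 ∪ d2PairsVia E v Y X ×ˢ Z ∪ d2Z := by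
    rintro ⟨⟨P, x⟩, z⟩ ht
    simp only [missingXXY, mem_product, mem_filter, mem_powersetCard] at ht
    obtain ⟨⟨⟨⟨hPY, hP⟩, hx⟩, hmissing⟩, hz⟩ := ht
    simp only [mem_union]
    obtain ⟨p, q, rfl, h⟩ | h | h | h :=
      exists_not_isTypical_or_isD2_of_notMem (v := v) (z := z) hE hP hmissing
    · rw [insert_subset_iff, singleton_subset_iff] at hPY
      exact .inl (.inl (.inl (mem_image.mpr ⟨((x, p, z), q),
        mem_product.mpr ⟨mem_filter.mpr ⟨by simp [*], h⟩, hPY.2⟩, rfl⟩)))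
    · exact .inl (.inl (.inr (mem_filter.mpr ⟨by simp [*], h⟩)))
    · exact .inl (.inr (mem_product.mpr ⟨mem_filter.mpr ⟨by simp [*], h⟩, hz⟩))
    · exact .inr (mem_image.mpr
        ⟨((P, z), x), mem_product.mpr ⟨mem_filter.mpr ⟨by simp [*], h⟩, hx⟩, rfl⟩)
  have hd2 : #d2 ≤ inducedD2Count E :=
    card_le_inducedD2Count ((injOn_insert_insert_of_disjoint hXY.symm hYZ hXZ).mono fun t ht => by
      simp_all [d2]) fun t ht => (mem_filter.mp ht).2
  calc #(missingXXY E Y X) * #Z = #(missingXXY E Y X ×ˢ Z) := (card_product _ _).symm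
    _ ≤ #(atypical ∪ d2 ∪ d2PairsVia E v Y X ×ˢ Z ∪ d2Z) := card_le_card hcover
    _ ≤ #atypical + #d2 + #(d2PairsVia E v Y X ×ˢ Z) + #d2Z := by grind [card_union_le]
    _ ≤ #(atypicalTriples E v X Y Z) * #Y + inducedD2Count E + inducedD2CountVia E v * #Z +
          inducedD2CountVia E v * #X := by
        gcongr
        · exact card_image_product_le _ _ _
        · rw [card_product]
          gcongr
          exact card_d2PairsVia_le hXY.symm
        · refine (card_image_product_le _ _ _).trans ?_
          gcongr
          exact card_d2PairsVia_le hYZ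
    _ = _ := by ring

lemma sum_choose_two_le (hE : ∀ e ∈ E, #e = 3) (hXY : Disjoint X Y) :
    ∑ Q ∈ X.powersetCard 2, (#{y ∈ Y | insert y Q ∉ E}).choose 2 ≤
      inducedD2Count E + #(missingXXY E Y X) * #X := by
  let nonedges : Finset (Σ _ : Finset V, Finset V) :=
    (X.powersetCard 2).sigma fun Q => {y ∈ Y | insert y Q ∉ E}.powersetCard 2
  let d2 := {t ∈ nonedges | IsD2 E (t.2 ∪ t.1)}
  let missing : Finset (Σ _ : Finset V, Finset V) :=
    (missingXXY E Y X ×ˢ X).image fun t => ⟨{t.1.2, t.2}, t.1.1⟩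
  have hmem : ∀ t ∈ nonedges, t.1 ⊆ X ∧ #t.1 = 2 ∧ t.2 ⊆ Y ∧ #t.2 = 2 ∧
      ∀ y ∈ t.2, insert y t.1 ∉ E := by
    intro t ht
    simp only [nonedges, mem_sigma, mem_powersetCard] at ht
    grind
  have hcover : nonedges ⊆ d2 ∪ missing := by
    rintro ⟨Q, P⟩ ht
    obtain ⟨hQX, hQ, hPY, hP, hQP⟩ := hmem _ ht
    rw [mem_union]
    obtain h | ⟨p, q, rfl, h⟩ := isD2_union_or_exists_notMem hE hP hQ hQP
    · exact .inl (mem_filter.mpr ⟨ht, h⟩)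
    · rw [insert_subset_iff, singleton_subset_iff] at hQX
      exact .inr (mem_image.mpr ⟨((P, p), q),
        mem_product.mpr ⟨mem_filter.mpr ⟨by simp [*], h⟩, hQX.2⟩, rfl⟩)
  have hd2 : #d2 ≤ inducedD2Count E := by
    refine card_le_inducedD2Count (f := fun t => t.2 ∪ t.1) (fun t ht t' ht' h => ?_)
      fun t ht => (mem_filter.mp ht).2
    obtain ⟨hQ, -, hP, -⟩ := hmem t (filter_subset _ _ ht)
    obtain ⟨hQ', -, hP', -⟩ := hmem t' (filter_subset _ _ ht')
    obtain ⟨h2, h1⟩ := (union_eq_union_iff_of_disjoint hXY.symm hP hP' hQ hQ').mp h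
    exact Sigma.ext h1 (heq_of_eq h2)
  calc ∑ Q ∈ X.powersetCard 2, (#{y ∈ Y | insert y Q ∉ E}).choose 2 = #nonedges := by
        simp [nonedges, card_sigma]
    _ ≤ #(d2 ∪ missing) := card_le_card hcover
    _ ≤ #d2 + #missing := card_union_le _ _
    _ ≤ _ := add_le_add hd2 (card_image_product_le _ _ _)

end Counting

section Density

variable {V : Type} [DecidableEq V] {E : Finset (Finset V)} {v : V} {A B X Y : Finset V} {ε : ℝ}

lemma eLink_add_card_missingLink : eLink E v A B + #(missingLink E v A B) = #A * #B := by
  rw [eLink, missingLink, card_filter_add_card_filter_not, card_product]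

lemma dLink_mul_card : dLink E v A B * (#A * #B) = eLink E v A B := by
  refine div_mul_cancel_of_imp fun h => ?_
  have : eLink E v A B ≤ #A * #B := (card_filter_le _ _).trans (card_product A B).le
  have : (eLink E v A B : ℝ) ≤ #A * #B := by exact_mod_cast this
  exact le_antisymm (h ▸ this) (by positivity)

lemma eLink_le_of_dLink_le (h : dLink E v A B ≤ ε) : (eLink E v A B : ℝ) ≤ ε * (#A * #B) := by
  rw [← dLink_mul_card]
  gcongr

lemma card_missingLink_le_of_le_dLink (h : 1 - ε ≤ dLink E v A B) :
    (#(missingLink E v A B) : ℝ) ≤ ε * (#A * #B) := by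
  have hsum : (eLink E v A B + #(missingLink E v A B) : ℝ) = #A * #B := by
    exact_mod_cast eLink_add_card_missingLink
  have hdense : (1 - ε) * (#A * #B) ≤ eLink E v A B := by
    rw [← dLink_mul_card]
    gcongr
  linarith

lemma choose_two_mul_card_le (hXY : Disjoint X Y) :
    (#X).choose 2 * #Y ≤ eXXY E X Y + #(missingXXY E X Y) := by
  have hedges : #{t ∈ X.powersetCard 2 ×ˢ Y | insert t.2 t.1 ∈ E} ≤ eXXY E X Y := by
    refine card_le_card_of_injOn (fun t => insert t.2 t.1) ?_ ?_
    · rintro ⟨P, y⟩ ht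
      simp only [mem_coe, mem_filter, mem_product, mem_powersetCard] at ht ⊢
      obtain ⟨⟨⟨hPX, hP⟩, hy⟩, he⟩ := ht
      have hyX := disjoint_right.mp hXY hy
      have hPY := disjoint_iff_inter_eq_empty.mp (hXY.mono_left hPX)
      refine ⟨he, ?_, ?_⟩
      · rw [insert_inter_of_notMem hyX, inter_eq_left.mpr hPX, hP]
      · rw [insert_inter_of_mem hy, hPY, insert_empty, card_singleton]
    · rintro ⟨P, y⟩ ht ⟨P', y'⟩ ht' h
      simp only [mem_coe, mem_filter, mem_product, mem_powersetCard] at ht ht'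
      exact Prod.ext_iff.mpr ((insert_eq_insert_iff_of_disjoint hXY ht.1.1.1 ht'.1.1.1
        ht.1.2 ht'.1.2).mp h)
  calc (#X).choose 2 * #Y = #(X.powersetCard 2 ×ˢ Y) := by rw [card_product, card_powersetCard]
    _ = #{t ∈ X.powersetCard 2 ×ˢ Y | insert t.2 t.1 ∈ E} + #(missingXXY E X Y) :=
        (card_filter_add_card_filter_not _).symm
    _ ≤ _ := by gcongr

lemma one_sub_le_dXXY (hXY : Disjoint X Y) (hX : 2 ≤ #X) (hY : 0 < #Y)
    (h : #(missingXXY E X Y) ≤ ε * ((#X).choose 2 * #Y)) : 1 - ε ≤ dXXY E X Y := by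
  have hpos : (0 : ℝ) < (#X).choose 2 * #Y := by
    have := Nat.choose_pos hX
    positivity
  have hsum : ((#X).choose 2 * #Y : ℝ) ≤ eXXY E X Y + #(missingXXY E X Y) := by
    exact_mod_cast choose_two_mul_card_le hXY
  rw [dXXY, le_div_iff₀ hpos]
  linarith

lemma dXXY_nonneg : 0 ≤ dXXY E X Y := by
  unfold dXXY
  positivity

end Density

section Homogeneous

variable {V : Type} [Fintype V] [DecidableEq V] {E : Finset (Finset V)} {v : V} {X Y Z : Finset V}
  {γ ε : ℝ}

lemma card_missingXXY_mul_card_le_of_dLink (hE : ∀ e ∈ E, #e = 3) (hXY : Disjoint X Y)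
    (hXZ : Disjoint X Z) (hYZ : Disjoint Y Z) (hdXZ : 1 - ε ≤ dLink E v X Z)
    (hdYZ : dLink E v Y Z ≤ ε) (hdXY : 1 - ε ≤ dLink E v X Y) :
    (#(missingXXY E Y X) * #Z : ℝ) ≤ 3 * ε * (#X * #Y ^ 2 * #Z) + inducedD2Count E +
      Fintype.card V * inducedD2CountVia E v := by
  have hcard : (#X + #Y + #Z : ℝ) ≤ Fintype.card V := by
    have := card_le_univ (X ∪ Y ∪ Z)
    rw [card_union_of_disjoint (disjoint_union_left.mpr ⟨hXZ, hYZ⟩), card_union_of_disjoint hXY]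
      at this
    exact_mod_cast this
  have hatypical : (#(atypicalTriples E v X Y Z) : ℝ) ≤
      3 * ε * (#X * #Y * #Z) + inducedD2CountVia E v := by
    calc (#(atypicalTriples E v X Y Z) : ℝ)
        ≤ #(missingLink E v X Y) * #Z + #(missingLink E v X Z) * #Y + eLink E v Y Z * #X +
            inducedD2CountVia E v := by exact_mod_cast card_atypicalTriples_le hE hXY hXZ hYZ
      _ ≤ ε * (#X * #Y) * #Z + ε * (#X * #Z) * #Y + ε * (#Y * #Z) * #X +
            inducedD2CountVia E v := by
          gcongr
          · exact card_missingLink_le_of_le_dLink hdXY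
          · exact card_missingLink_le_of_le_dLink hdXZ
          · exact eLink_le_of_dLink_le hdYZ
      _ = _ := by ring
  calc (#(missingXXY E Y X) * #Z : ℝ)
      ≤ #(atypicalTriples E v X Y Z) * #Y + inducedD2Count E +
          (#X + #Z) * inducedD2CountVia E v := by
        exact_mod_cast card_missingXXY_mul_card_le hE hXY hXZ hYZ
    _ ≤ (3 * ε * (#X * #Y * #Z) + inducedD2CountVia E v) * #Y + inducedD2Count E +
          (#X + #Z) * inducedD2CountVia E v := by gcongr
    _ = 3 * ε * (#X * #Y ^ 2 * #Z) + inducedD2Count E +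
          (#X + #Y + #Z) * inducedD2CountVia E v := by ring
    _ ≤ _ := by gcongr

lemma card_missingXXY_le_of_inducedD2Count_add_lt (hE : ∀ e ∈ E, #e = 3) (hXY : Disjoint X Y)
    (hX : 2 ≤ #X) (hY : 2 ≤ γ * #Y)
    (h : (inducedD2Count E + #(missingXXY E Y X) * #X : ℝ) < γ ^ 2 / 16 * (#X ^ 2 * #Y ^ 2)) :
    (#(missingXXY E X Y) : ℝ) ≤ γ * ((#X).choose 2 * #Y) := by
  by_contra! hlt
  refine h.not_ge ?_
  calc γ ^ 2 / 16 * (#X ^ 2 * #Y ^ 2) = (#X ^ 2 / 4 : ℝ) * ((γ * #Y) * (γ * #Y / 2) / 2) := by ring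
    _ ≤ (#X).choose 2 * ((γ * #Y) * (γ * #Y - 1) / 2) := by
        gcongr
        · exact sq_div_four_le_choose_two hX
        · linarith
    _ = #(X.powersetCard 2) * ((γ * #Y) * (γ * #Y - 1) / 2) := by rw [card_powersetCard]
    _ ≤ ∑ Q ∈ X.powersetCard 2, ((#{y ∈ Y | insert y Q ∉ E}).choose 2 : ℝ) := by
        refine card_mul_choose_two_le_sum (by linarith) ?_
        rw [card_missingXXY_eq_sum] at hlt
        rw [card_powersetCard]
        push_cast at hlt
        linarith
    _ ≤ _ := by exact_mod_cast sum_choose_two_le hE hXY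

lemma one_sub_le_dXXY_and_dXXY_of_card_missingXXY_le (hE : ∀ e ∈ E, #e = 3) (hXY : Disjoint X Y)
    (hγ : 0 < γ) (hγ1 : γ ≤ 1) (hX : 2 ≤ #X) (hY : 2 ≤ γ * #Y)
    (hN : (inducedD2Count E : ℝ) < γ ^ 2 / 128 * (#X ^ 2 * #Y ^ 2))
    (hYX : (#(missingXXY E Y X) : ℝ) ≤ 17 / 320 * γ ^ 2 * (#X * #Y ^ 2)) :
    1 - γ ≤ dXXY E X Y ∧ 1 - γ ≤ dXXY E Y X := by
  have hY2 : 2 ≤ #Y := by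
    exact_mod_cast hY.trans (mul_le_of_le_one_left (Nat.cast_nonneg _) hγ1)
  constructor
  · refine one_sub_le_dXXY hXY hX (by omega)
      (card_missingXXY_le_of_inducedD2Count_add_lt hE hXY hX hY ?_)
    calc (inducedD2Count E + #(missingXXY E Y X) * #X : ℝ)
        < γ ^ 2 / 128 * (#X ^ 2 * #Y ^ 2) + 17 / 320 * γ ^ 2 * (#X * #Y ^ 2) * #X :=
          add_lt_add_of_lt_of_le hN (mul_le_mul_of_nonneg_right hYX (Nat.cast_nonneg _))
      _ = 39 / 640 * (γ ^ 2 * (#X ^ 2 * #Y ^ 2)) := by ring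
      _ ≤ 1 / 16 * (γ ^ 2 * (#X ^ 2 * #Y ^ 2)) :=
          mul_le_mul_of_nonneg_right (by norm_num) (by positivity)
      _ = γ ^ 2 / 16 * (#X ^ 2 * #Y ^ 2) := by ring
  · refine one_sub_le_dXXY hXY.symm hY2 (by omega) ?_
    calc (#(missingXXY E Y X) : ℝ) ≤ 17 / 320 * γ ^ 2 * (#X * #Y ^ 2) := hYX
      _ ≤ 1 / 4 * γ * (#X * #Y ^ 2) :=
          mul_le_mul_of_nonneg_right (by nlinarith) (by positivity)
      _ = γ * (#Y ^ 2 / 4 * #X) := by ring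
      _ ≤ γ * ((#Y).choose 2 * #X) := by
        gcongr
        exact sq_div_four_le_choose_two hY2

end Homogeneous

theorem homogeneous_dense_general {V : Type} [Fintype V] [DecidableEq V] {E : Finset (Finset V)}
    (hE : ∀ e ∈ E, #e = 3) {γ : ℝ} (hγ : 0 < γ) {v : V} {X Y Z : Finset V}
    (hXY : Disjoint X Y) (hXZ : Disjoint X Z) (hYZ : Disjoint Y Z)
    (hX : min (2 / γ) 2 ≤ #X) (hY : 2 / γ ≤ #Y)
    (hdXZ : 1 - γ ^ 2 / 80 ≤ dLink E v X Z) (hdYZ : dLink E v Y Z ≤ γ ^ 2 / 80)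
    (hdXY : 1 - γ ^ 2 / 80 ≤ dLink E v X Y) :
    (1 - γ ≤ dXXY E X Y ∧ 1 - γ ≤ dXXY E Y X) ∨
    γ ^ 2 / 128 * (min (#X * #Y ^ 2 * #Z) (#X ^ 2 * #Y ^ 2) : ℝ) ≤ inducedD2Count E ∨
    γ ^ 2 / 128 * (1 / Fintype.card V) * (#X * #Y ^ 2 * #Z : ℝ) ≤ inducedD2CountVia E v := by
  obtain hγ1 | hγ1 := le_or_gt 1 γ
  · exact .inl ⟨(sub_nonpos.mpr hγ1).trans dXXY_nonneg, (sub_nonpos.mpr hγ1).trans dXXY_nonneg⟩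
  have h2γ : 2 < 2 / γ := by rw [lt_div_iff₀ hγ]; linarith
  have hX2 : 2 ≤ #X := by exact_mod_cast min_eq_right h2γ.le ▸ hX
  have hγY : 2 ≤ γ * #Y := (div_le_iff₀' hγ).mp hY
  by_contra! ⟨hnot, hN, hNv⟩
  have hNZ : (inducedD2Count E : ℝ) < γ ^ 2 / 128 * (#X * #Y ^ 2 * #Z) :=
    hN.trans_le (by gcongr; exact min_le_left _ _)
  have hNXY : (inducedD2Count E : ℝ) < γ ^ 2 / 128 * (#X ^ 2 * #Y ^ 2) :=
    hN.trans_le (by gcongr; exact min_le_right _ _)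
  have hn : (0 : ℝ) < Fintype.card V := by exact_mod_cast Fintype.card_pos_iff.mpr ⟨v⟩
  have hnNv : (Fintype.card V * inducedD2CountVia E v : ℝ) ≤
      γ ^ 2 / 128 * (#X * #Y ^ 2 * #Z) := by
    calc (Fintype.card V * inducedD2CountVia E v : ℝ)
        ≤ Fintype.card V * (γ ^ 2 / 128 * (1 / Fintype.card V) * (#X * #Y ^ 2 * #Z)) := by gcongr
      _ = _ := by field_simp
  have hZ : (0 : ℝ) < #Z := by
    have := (Nat.cast_nonneg _).trans_lt hNZ
    exact pos_of_mul_pos_right (pos_of_mul_pos_right this (by positivity)) (by positivity)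
  have hYX : (#(missingXXY E Y X) : ℝ) ≤ 17 / 320 * γ ^ 2 * (#X * #Y ^ 2) := by
    refine le_of_mul_le_mul_right ?_ hZ
    linarith [card_missingXXY_mul_card_le_of_dLink hE hXY hXZ hYZ hdXZ hdYZ hdXY]
  obtain ⟨hdXXY, hdYYX⟩ := one_sub_le_dXXY_and_dXXY_of_card_missingXXY_le hE hXY hγ hγ1.le hX2 hγY
    hNXY hYX
  exact (hnot hdXXY).not_ge hdYYX

theorem homogeneous_dense {V : Type} [Fintype V] [DecidableEq V]
    (E : Finset (Finset V)) (hE : ∀ e ∈ E, e.card = 3)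
    (γ : ℝ) (hγ : 0 < γ) (v : V) (X Y Z : Finset V)
    (hvX : v ∉ X) (hvY : v ∉ Y) (hvZ : v ∉ Z)
    (hXY : Disjoint X Y) (hXZ : Disjoint X Z) (hYZ : Disjoint Y Z)
    (hX : (X.card : ℝ) ≥ 2 / γ) (hY : (Y.card : ℝ) ≥ 2 / γ)
    (hdXZ : dLink E v X Z ≥ 1 - γ ^ 2 / 80)
    (hdYZ : dLink E v Y Z ≤ γ ^ 2 / 80)
    (hdXY : dLink E v X Y ≥ 1 - γ ^ 2 / 80) :
    (dXXY E X Y ≥ 1 - γ ∧ dXXY E Y X ≥ 1 - γ) ∨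
    (inducedD2Count E : ℝ) ≥ γ ^ 2 / 128 *
      min (min ((X.card : ℝ) ^ 2 * (Y.card : ℝ) * (Z.card : ℝ))
               ((X.card : ℝ) * (Y.card : ℝ) ^ 2 * (Z.card : ℝ)))
          ((X.card : ℝ) ^ 2 * (Y.card : ℝ) ^ 2) ∨
    (inducedD2CountVia E v : ℝ) ≥ γ ^ 2 / 128 * (1 / (Fintype.card V : ℝ)) *
      min ((X.card : ℝ) ^ 2 * (Y.card : ℝ) * (Z.card : ℝ))
          ((X.card : ℝ) * (Y.card : ℝ) ^ 2 * (Z.card : ℝ)) := by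
  refine (homogeneous_dense_general hE hγ hXY hXZ hYZ ((min_le_left _ _).trans hX) hY hdXZ hdYZ
    hdXY).imp_right (.imp (le_trans ?_) (le_trans ?_)) <;> gcongr
  all_goals simp
end

section
/- Let 1 ≤ m < n be integers, let 0 < β < 1, and let G be a cograph on n vertices. Then there is a partition V(G) = S ∪ V₁ ∪ ⋯ ∪ V_t and a set of pairs M ⊆ {{i,j} : 1 ≤ i < j ≤ t} forming a matching (no two pairs of M share an index), such that: (1) |S| ≤ (2·⌈n/m⌉ − 3)·10βm ≤ 20βn; (2) βm ≤ |Vᵢ| ≤ m for every 1 ≤ i ≤ t; (3) for every 1 ≤ i < j ≤ t with {i,j} ∉ M, the pair (Vᵢ, Vⱼ) is homogeneous (the bipartite graph between Vᵢ and Vⱼ in G is complete or empty); (4) for every {i,j} ∈ M there are V'ᵢ ⊆ Vᵢ and V'ⱼ ⊆ Vⱼ with |V'ᵢ|, |V'ⱼ| ≥ β³m/2 such that either V'ᵢ is complete to Vⱼ and V'ⱼ is complete to Vᵢ in G, or V'ᵢ is empty to Vⱼ and V'ⱼ is empty to Vᵢ in G. -/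
open Finset

/-- A graph is a cograph iff it contains no induced path on 4 vertices. -/
def IsCograph {V : Type} (G : SimpleGraph V) : Prop :=
  ¬ ∃ a b c d : V, a ≠ b ∧ a ≠ c ∧ a ≠ d ∧ b ≠ c ∧ b ≠ d ∧ c ≠ d ∧
    G.Adj a b ∧ G.Adj b c ∧ G.Adj c d ∧ ¬ G.Adj a c ∧ ¬ G.Adj a d ∧ ¬ G.Adj b d

/-- `A` is complete to `B` in `G`. -/
def CompleteTo {V : Type} (G : SimpleGraph V) (A B : Finset V) : Prop :=
  ∀ a ∈ A, ∀ b ∈ B, G.Adj a b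

/-- `A` is empty to `B` in `G`. -/
def EmptyTo {V : Type} (G : SimpleGraph V) (A B : Finset V) : Prop :=
  ∀ a ∈ A, ∀ b ∈ B, ¬ G.Adj a b

/-!
Walk down the cotree from the root, into the larger branch each time, as long as the set `C` of
vertices split off has at most `m` elements and more than `m` remain. The type (join or union) of
the node at which a vertex of `C` is split off is its adjacency to everything split off later and
to everything that remains. Hence two sets of vertices of `C`, each of a single type, form a
homogeneous pair when one precedes the other.

Up to `O(βm)` discarded vertices, `C` is a matched pair of parts of opposite types followed by one
more part. Some type has `β²m` vertices that precede all but fewer than `β²m` vertices of the other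
type; discarding the latter makes them uniform to the other part. For the other side of the pair,
that part is cut off at a point where its last `β²m` vertices are interspersed with at most `βm`
vertices of the first type, which are discarded as well; minimizing a linear potential finds such a
point.

Below `C` there are two branches, homogeneous to each other. A branch with at most `m` vertices is
one part, and a larger one is treated recursively. If exactly one of them is larger, then the walk
stopped because `C` and the smaller branch have more than `m` vertices together, so the larger
branch needs one block of `m` vertices fewer than the whole, which pays for the waste.
-/

section Uniform

variable {V : Type} {G : SimpleGraph V} {s : Bool} {A B A' B' : Finset V}

/-- All pairs between `A` and `B` have the same adjacency, recorded by `s`: `true` for complete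
and `false` for empty. -/
def UniformTo (G : SimpleGraph V) (s : Bool) (A B : Finset V) : Prop :=
  ∀ a ∈ A, ∀ b ∈ B, (G.Adj a b ↔ s = true)

/-- The pair `(A, B)` is homogeneous: the bipartite graph between `A` and `B` is complete or
empty. -/
def IsHomogeneous (G : SimpleGraph V) (A B : Finset V) : Prop :=
  ∃ s, UniformTo G s A B

/-- The relation required of the matched pairs of parts: at least `d` vertices on each side are
joined uniformly, and with the same adjacency, to the whole other side. -/
def IsStaggered (G : SimpleGraph V) (d : ℝ) (A B : Finset V) : Prop :=
  ∃ s, ∃ A' ⊆ A, ∃ B' ⊆ B, d ≤ #A' ∧ d ≤ #B' ∧ UniformTo G s A' B ∧ UniformTo G s B' A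

lemma uniformTo_true : UniformTo G true A B ↔ CompleteTo G A B := by
  simp only [UniformTo, CompleteTo, iff_true]

lemma uniformTo_false : UniformTo G false A B ↔ EmptyTo G A B := by
  simp only [UniformTo, EmptyTo, Bool.false_eq_true, iff_false]

lemma UniformTo.symm (h : UniformTo G s A B) : UniformTo G s B A :=
  fun b hb a ha => (G.adj_comm b a).trans (h a ha b hb)

lemma UniformTo.mono (h : UniformTo G s A B) (hA : A' ⊆ A) (hB : B' ⊆ B) :
    UniformTo G s A' B' :=
  fun a ha b hb => h a (hA ha) b (hB hb)

lemma UniformTo.compl (h : UniformTo G s A B) (hd : Disjoint A B) : UniformTo Gᶜ (!s) A B := by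
  intro a ha b hb
  have hab : a ≠ b := fun e => disjoint_left.1 hd ha (e ▸ hb)
  simp [SimpleGraph.compl_adj, hab, h a ha b hb]

lemma isHomogeneous_iff : IsHomogeneous G A B ↔ CompleteTo G A B ∨ EmptyTo G A B := by
  rw [IsHomogeneous, Bool.exists_bool, uniformTo_true, uniformTo_false, or_comm]

lemma IsHomogeneous.symm (h : IsHomogeneous G A B) : IsHomogeneous G B A :=
  h.imp fun _ => UniformTo.symm

lemma IsHomogeneous.mono (h : IsHomogeneous G A B) (hA : A' ⊆ A) (hB : B' ⊆ B) :
    IsHomogeneous G A' B' :=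
  h.imp fun _ hs => hs.mono hA hB

lemma IsStaggered.symm {d : ℝ} (h : IsStaggered G d A B) : IsStaggered G d B A := by
  obtain ⟨s, A', hA, B', hB, hA', hB', hAB, hBA⟩ := h
  exact ⟨s, B', hB, A', hA, hB', hA', hBA, hAB⟩

lemma IsStaggered.exists_completeTo_or_emptyTo {d δ : ℝ} (h : IsStaggered G d A B) (hδ : δ ≤ d) :
    ∃ A' ⊆ A, ∃ B' ⊆ B, δ ≤ (#A' : ℝ) ∧ δ ≤ (#B' : ℝ) ∧
      ((CompleteTo G A' B ∧ CompleteTo G B' A) ∨ (EmptyTo G A' B ∧ EmptyTo G B' A)) := by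
  obtain ⟨s, A', hA, B', hB, hA', hB', hAB, hBA⟩ := h
  refine ⟨A', hA, B', hB, hδ.trans hA', hδ.trans hB', ?_⟩
  cases s
  · exact .inr ⟨uniformTo_false.1 hAB, uniformTo_false.1 hBA⟩
  · exact .inl ⟨uniformTo_true.1 hAB, uniformTo_true.1 hBA⟩

end Uniform

section Split

variable {V : Type} [DecidableEq V] {G : SimpleGraph V} {U A B : Finset V} {v w z : V}

/-- The induced subgraph on `U` decomposes as at the root of a cotree: `U` has a nonempty proper
subset that is homogeneous to the rest of `U`. -/
def Splits (G : SimpleGraph V) (U : Finset V) : Prop :=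
  ∃ X ⊆ U, X.Nonempty ∧ (U \ X).Nonempty ∧ IsHomogeneous G X (U \ X)

lemma Splits.compl (h : Splits G U) : Splits Gᶜ U := by
  obtain ⟨X, hXU, hX, hUX, s, hs⟩ := h
  exact ⟨X, hXU, hX, hUX, !s, hs.compl disjoint_sdiff⟩

lemma IsCograph.compl {V : Type} {G : SimpleGraph V} (hG : IsCograph G) : IsCograph Gᶜ := by
  -- the complement of the path `a b c d` is the path `b d a c`
  rintro ⟨a, b, c, d, hab, hac, had, hbc, hbd, hcd, eab, ebc, ecd, nac, nad, nbd⟩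
  simp only [SimpleGraph.compl_adj, not_and, not_not] at *
  exact hG ⟨b, d, a, c, hbd, hab.symm, hbc, had.symm, hcd.symm, hac, nbd hbd, (nad had).symm,
    nac hac, fun e => eab.2 e.symm, ebc.2, fun e => ecd.2 e.symm⟩

lemma IsCograph.splits_insert_of_adj (hG : IsCograph G) (hv : v ∉ A ∪ B) (hAB : EmptyTo G A B)
    (hw : w ∈ A) (hvw : ¬ G.Adj v w) (hz : z ∈ B) (hvz : G.Adj v z) :
    Splits G (insert v (A ∪ B)) := by
  classical
  let X := A.filter fun x => ¬ G.Adj v x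
  have mem_X : ∀ x, x ∈ X ↔ x ∈ A ∧ ¬ G.Adj v x := fun x => by simp [X]
  have hXA : X ⊆ A := filter_subset _ _
  refine ⟨X, by grind, ⟨w, by grind⟩, ⟨v, by grind⟩, false, uniformTo_false.2 ?_⟩
  intro y hyX x hx hyx
  obtain ⟨hyA, hvy⟩ := (mem_X y).1 hyX
  have hxv : x ≠ v := by rintro rfl; exact hvy hyx.symm
  have hxB : x ∉ B := fun h => hAB y hyA x h hyx
  have hxA : x ∈ A := by grind
  have hvx : G.Adj v x := by grind
  -- an edge leaving `X` closes the induced path `z v x y`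
  have hxz : ¬ G.Adj z x := fun h => hAB x hxA z hz h.symm
  have hyz : ¬ G.Adj z y := fun h => hAB y hyA z hz h.symm
  refine hG ⟨z, v, x, y, hvz.ne', ?_, ?_, hvx.ne, ?_, hyx.ne', hvz.symm, hvx, hyx.symm,
    hxz, hyz, hvy⟩ <;> grind

lemma IsCograph.splits_insert_of_emptyTo (hG : IsCograph G) (hv : v ∉ A ∪ B) (hA : A.Nonempty)
    (hB : B.Nonempty) (hd : Disjoint A B) (hAB : EmptyTo G A B) :
    Splits G (insert v (A ∪ B)) := by
  by_cases hdom : CompleteTo G {v} (A ∪ B)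
  · obtain ⟨a, ha⟩ := hA
    exact ⟨{v}, by simp, by simp, ⟨a, by grind⟩,
      true, uniformTo_true.2 fun x hx y hy => hdom x hx y (by grind)⟩
  obtain ⟨w, hw, hvw⟩ : ∃ w ∈ A ∪ B, ¬ G.Adj v w := by
    simpa [CompleteTo] using hdom
  wlog hwA : w ∈ A generalizing A B
  · rw [union_comm] at hv hdom hw ⊢
    exact this hv hB hA hd.symm (uniformTo_false.1 (uniformTo_false.2 hAB).symm) hdom hw
      ((mem_union.1 hw).resolve_right hwA)
  by_cases hvB : ∃ z ∈ B, G.Adj v z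
  · obtain ⟨z, hz, hvz⟩ := hvB
    exact hG.splits_insert_of_adj hv hAB hwA hvw hz hvz
  · refine ⟨B, by grind, hB, ⟨v, by grind⟩, false, UniformTo.symm (uniformTo_false.2 ?_)⟩
    intro a ha b hb
    by_cases hav : a = v
    · exact hav ▸ fun h => hvB ⟨b, hb, h⟩
    · exact hAB a (by grind) b hb

lemma IsCograph.splits (hG : IsCograph G) (hU : 1 < #U) : Splits G U := by
  induction U using Finset.induction_on with
  | empty => simp at hU
  | insert v U hv ih =>
    by_cases hU1 : 1 < #U
    · obtain ⟨X, hXU, hX, hUX, s, hs⟩ := ih hU1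
      rw [← union_sdiff_of_subset hXU] at hv ⊢
      cases s
      · exact hG.splits_insert_of_emptyTo hv hX hUX disjoint_sdiff (uniformTo_false.1 hs)
      · have hs' := hs.compl disjoint_sdiff
        simpa using (hG.compl.splits_insert_of_emptyTo hv hX hUX disjoint_sdiff
          (uniformTo_false.1 hs')).compl
    · obtain ⟨u, rfl⟩ := card_eq_one.1 (by grind : #U = 1)
      classical
      exact ⟨{v}, by simp, by simp, ⟨u, by grind⟩, decide (G.Adj v u), by intro a ha b hb; grind⟩

end Split

section Packing

variable {V : Type} [DecidableEq V] {G : SimpleGraph V} {m : ℕ} {a d L L₁ L₂ : ℝ}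
  {U U₁ U₂ W A B : Finset V} {P P₁ P₂ : Finset (Finset V)}

/-- A partition of `U`, up to at most `L` leftover vertices, into parts with between `a` and `m`
vertices such that the inhomogeneous pairs of parts form a matching of pairs staggered at `d`.
The leftover vertices are not recorded: they are those of `U` outside all members of `P`. -/
structure IsMatchedPacking (G : SimpleGraph V) (m : ℕ) (a d : ℝ) (U : Finset V) (L : ℝ)
    (P : Finset (Finset V)) : Prop where
  subset : ∀ A ∈ P, A ⊆ U
  le_card : ∀ A ∈ P, a ≤ #A
  card_le : ∀ A ∈ P, #A ≤ m
  disjoint : ∀ A ∈ P, ∀ B ∈ P, A ≠ B → Disjoint A B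
  card_leftover_le : (#(U \ P.biUnion id) : ℝ) ≤ L
  matching : ∀ A ∈ P, ∀ B ∈ P, ∀ C ∈ P, A ≠ B → A ≠ C →
    ¬ IsHomogeneous G A B → ¬ IsHomogeneous G A C → B = C
  staggered : ∀ A ∈ P, ∀ B ∈ P, A ≠ B → ¬ IsHomogeneous G A B → IsStaggered G d A B

namespace IsMatchedPacking

lemma mono (h : IsMatchedPacking G m a d U L₁ P) (hL : L₁ ≤ L₂) :
    IsMatchedPacking G m a d U L₂ P :=
  { h with card_leftover_le := h.card_leftover_le.trans hL }

lemma expand (h : IsMatchedPacking G m a d U L₁ P) (hU : U ⊆ W) (hW : (#(W \ U) : ℝ) ≤ L₂) :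
    IsMatchedPacking G m a d W (L₁ + L₂) P where
  __ := h
  subset A hA := (h.subset A hA).trans hU
  card_leftover_le := by
    have hsub : W \ P.biUnion id ⊆ (U \ P.biUnion id) ∪ (W \ U) := by grind
    calc (#(W \ P.biUnion id) : ℝ)
        ≤ #(U \ P.biUnion id) + #(W \ U) := by
          exact_mod_cast (card_le_card hsub).trans (card_union_le _ _)
      _ ≤ L₁ + L₂ := add_le_add h.card_leftover_le hW

lemma union (h₁ : IsMatchedPacking G m a d U₁ L₁ P₁) (h₂ : IsMatchedPacking G m a d U₂ L₂ P₂)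
    (hU : Disjoint U₁ U₂) (hP : ∀ A ∈ P₁, ∀ B ∈ P₂, IsHomogeneous G A B) :
    IsMatchedPacking G m a d (U₁ ∪ U₂) (L₁ + L₂) (P₁ ∪ P₂) := by
  have hP' : ∀ A ∈ P₂, ∀ B ∈ P₁, IsHomogeneous G A B := fun A hA B hB => (hP B hB A hA).symm
  have hdisj : ∀ A ∈ P₁, ∀ B ∈ P₂, Disjoint A B := fun A hA B hB =>
    disjoint_of_subset_left (h₁.subset A hA) (disjoint_of_subset_right (h₂.subset B hB) hU)
  refine ⟨?_, ?_, ?_, ?_, ?_, ?_, ?_⟩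
  · exact forall_mem_union.2 ⟨fun A hA => (h₁.subset A hA).trans subset_union_left,
      fun A hA => (h₂.subset A hA).trans subset_union_right⟩
  · exact forall_mem_union.2 ⟨h₁.le_card, h₂.le_card⟩
  · exact forall_mem_union.2 ⟨h₁.card_le, h₂.card_le⟩
  · have := h₁.disjoint
    have := h₂.disjoint
    grind
  · have hsub : (U₁ ∪ U₂) \ (P₁ ∪ P₂).biUnion id ⊆
        (U₁ \ P₁.biUnion id) ∪ (U₂ \ P₂.biUnion id) := by
      rw [union_biUnion]
      grind
    calc (#((U₁ ∪ U₂) \ (P₁ ∪ P₂).biUnion id) : ℝ)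
        ≤ #(U₁ \ P₁.biUnion id) + #(U₂ \ P₂.biUnion id) := by
          exact_mod_cast (card_le_card hsub).trans (card_union_le _ _)
      _ ≤ L₁ + L₂ := add_le_add h₁.card_leftover_le h₂.card_leftover_le
  · have := h₁.matching
    have := h₂.matching
    grind
  · have := h₁.staggered
    have := h₂.staggered
    grind

lemma singleton (ha : a ≤ #U) (hm : #U ≤ m) : IsMatchedPacking G m a d U 0 {U} := by
  constructor <;> simp [ha, hm]

lemma pair (hAB : Disjoint A B) (hA : a ≤ #A) (hA' : #A ≤ m) (hB : a ≤ #B) (hB' : #B ≤ m)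
    (h : IsStaggered G d A B) : IsMatchedPacking G m a d (A ∪ B) 0 {A, B} := by
  have := h.symm
  constructor
  case card_leftover_le => simp
  all_goals grind

lemma filter_le_card (h : IsMatchedPacking G m 0 d U L P) (ha : 0 ≤ a) :
    IsMatchedPacking G m a d U (L + #P * a) (P.filter fun A => a ≤ #A) := by
  refine ⟨?_, ?_, ?_, ?_, ?_, ?_, ?_⟩
  case refine_5 =>
    set Q := P.filter fun A => ¬ a ≤ #A
    have hsub : U \ (P.filter fun A => a ≤ #A).biUnion id ⊆ (U \ P.biUnion id) ∪ Q.biUnion id := by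
      intro x hx
      simp only [mem_sdiff, mem_union, mem_biUnion, mem_filter, id, Q] at hx ⊢
      grind
    have hQ : (#(Q.biUnion id) : ℝ) ≤ #P * a :=
      calc (#(Q.biUnion id) : ℝ) ≤ ∑ A ∈ Q, (#A : ℝ) := by exact_mod_cast card_biUnion_le
        _ ≤ #Q * a := by
          rw [← nsmul_eq_mul]
          exact sum_le_card_nsmul _ _ _ fun A hA => (not_le.1 (mem_filter.1 hA).2).le
        _ ≤ #P * a := by gcongr; exact filter_subset _ _
    calc (#(U \ (P.filter fun A => a ≤ #A).biUnion id) : ℝ)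
        ≤ #(U \ P.biUnion id) + #(Q.biUnion id) := by
          exact_mod_cast (card_le_card hsub).trans (card_union_le _ _)
      _ ≤ L + #P * a := add_le_add h.card_leftover_le hQ
  all_goals
    have ⟨_, _, _, _, _, _, _⟩ := h
    grind

lemma exists_subset_singleton (ha : 0 ≤ a) (hU : #U ≤ m) :
    ∃ P ⊆ {U}, IsMatchedPacking G m a d U a P := by
  refine ⟨_, filter_subset _ _, (filter_le_card (singleton (by simp) hU) ha).mono ?_⟩
  simp

end IsMatchedPacking

end Packing

section Rank

variable {ι α : Type*} [LinearOrder α] {r : ι → α} {d : ℝ}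

lemma exists_rank_quantile {N : Finset ι} (r : ι → α) (hd : 0 < d) (hN : d ≤ #N) :
    ∃ z ∈ N, d ≤ #{y ∈ N | r y ≤ r z} ∧ (#{y ∈ N | r y < r z} : ℝ) < d := by
  have nonempty_of_le {s : Finset ι} (hs : d ≤ #s) : s.Nonempty :=
    card_pos.1 (by exact_mod_cast hd.trans_le hs)
  have hne : {z ∈ N | d ≤ #{y ∈ N | r y ≤ r z}}.Nonempty := by
    obtain ⟨z, hz, hmax⟩ := exists_max_image N r (nonempty_of_le hN)
    exact ⟨z, mem_filter.2 ⟨hz, by rwa [filter_true_of_mem hmax]⟩⟩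
  obtain ⟨z, hz, hmin⟩ := exists_min_image _ r hne
  obtain ⟨hzN, hzd⟩ := mem_filter.1 hz
  refine ⟨z, hzN, hzd, lt_of_not_ge fun hlt => ?_⟩
  obtain ⟨w, hw, hmax⟩ := exists_max_image _ r (nonempty_of_le hlt)
  obtain ⟨hwN, hwz⟩ := mem_filter.1 hw
  refine hwz.not_ge (hmin w (mem_filter.2 ⟨hwN, hlt.trans ?_⟩))
  gcongr with y hy
  exact fun hyz => hmax y (mem_filter.2 ⟨hy, hyz⟩)

lemma exists_leading_sign {C : Finset ι} {σ : ι → Bool}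
    (hσ : ∀ x ∈ C, ∀ y ∈ C, r x = r y → σ x = σ y) (hd : 0 < d)
    (hC : ∀ s, d ≤ #{x ∈ C | σ x = s}) :
    ∃ s t, d ≤ #{x ∈ C | σ x = s ∧ r x ≤ t} ∧ (#{x ∈ C | σ x = !s ∧ r x ≤ t} : ℝ) < d := by
  choose z hz hle hlt using fun s => exists_rank_quantile r hd (hC s)
  simp only [filter_filter, mem_filter] at hz hle hlt
  obtain ⟨s, hs⟩ : ∃ s, r (z s) < r (z !s) := by
    have hne : r (z true) ≠ r (z false) := fun h => by
      simpa [(hz _).2] using hσ _ (hz true).1 _ (hz false).1 h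
    exact hne.lt_or_gt.elim (fun h => ⟨true, h⟩) fun h => ⟨false, h⟩
  refine ⟨s, r (z s), hle s, lt_of_le_of_lt ?_ (hlt !s)⟩
  gcongr

lemma card_filter_rank_gt {s : Finset ι} {u t : α} (hut : u ≤ t) :
    #{x ∈ s | u < r x} = #{x ∈ s | u < r x ∧ r x ≤ t} + #{x ∈ s | t < r x} := by
  rw [← card_filter_add_card_filter_not (s := {x ∈ s | u < r x}) (fun x => r x ≤ t),
    filter_filter, filter_filter]
  congr 3
  grind

lemma exists_min_potential_cut {N : Finset ι} (P : Finset ι) (r : ι → α) (a : ℝ) (hd : 0 ≤ d)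
    (hN : N.Nonempty) :
    ∃ x ∈ N, a * #{y ∈ N | r x < r y} ≤ d * #{y ∈ P | r x < r y} ∧
      ∀ z ∈ N, r z ≤ r x →
        d * #{y ∈ P | r z < r y ∧ r y ≤ r x} ≤ a * #{y ∈ N | r z < r y ∧ r y ≤ r x} := by
  -- the potential minimized here is at most `0` at the top of `N`
  obtain ⟨x, hx, hmin⟩ := exists_min_image N
    (fun x => a * #{y ∈ N | r x < r y} - d * #{y ∈ P | r x < r y}) hN
  refine ⟨x, hx, ?_, fun z hz hzx => ?_⟩
  · obtain ⟨w, hw, hmax⟩ := exists_max_image N r hN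
    have htop : ({y ∈ N | r w < r y} : Finset ι) = ∅ :=
      filter_false_of_mem fun y hy => (hmax y hy).not_gt
    have hxw := hmin w hw
    have : 0 ≤ d * #{y ∈ P | r w < r y} := by positivity
    simp only [htop, card_empty, Nat.cast_zero, mul_zero] at hxw
    linarith
  · have hxz := hmin z hz
    simp only [card_filter_rank_gt hzx, Nat.cast_add, mul_add] at hxz
    linarith

lemma exists_staggering_cut {N P : Finset ι} (r : ι → α) {a : ℝ} (hd : 0 < d) (ha : 0 < a)
    (hN : a + d ≤ #N) (hP : d * #P ≤ a * a) :
    ∃ t, ∃ z ∈ N, r z ≤ t ∧ (#{y ∈ N | t < r y} : ℝ) ≤ a ∧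
      d ≤ #{y ∈ N | r z ≤ r y ∧ r y ≤ t} ∧ (#{y ∈ P | r z < r y ∧ r y ≤ t} : ℝ) ≤ a := by
  have hne : N.Nonempty := card_pos.1 (by exact_mod_cast (add_pos ha hd).trans_le hN)
  obtain ⟨x, -, hx, hmin⟩ := exists_min_potential_cut P r a hd.le hne
  have habove : (#{y ∈ N | r x < r y} : ℝ) ≤ a := by
    have : (#{y ∈ P | r x < r y} : ℝ) ≤ #P := by gcongr; exact filter_subset _ _
    exact le_of_mul_le_mul_left (hx.trans ((by gcongr : _ ≤ d * (#P : ℝ)).trans hP)) ha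
  have hbelow : d ≤ #{y ∈ N | r y ≤ r x} := by
    have : (#{y ∈ N | r y ≤ r x} : ℝ) + #{y ∈ N | r x < r y} = #N := by
      simp only [← not_le]
      exact_mod_cast card_filter_add_card_filter_not (s := N) (r · ≤ r x)
    linarith
  obtain ⟨z, hz, hzd, hzd'⟩ := exists_rank_quantile (OrderDual.toDual ∘ r) hd hbelow
  obtain ⟨hzN, hzx⟩ := mem_filter.1 hz
  simp only [Function.comp_apply, OrderDual.toDual_le_toDual, OrderDual.toDual_lt_toDual,
    filter_filter, and_comm (b := r z ≤ r _), and_comm (b := r z < r _)] at hzd hzd'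
  refine ⟨r x, z, hzN, hzx, habove, hzd, le_of_mul_le_mul_left ?_ hd⟩
  calc d * #{y ∈ P | r z < r y ∧ r y ≤ r x}
      ≤ a * #{y ∈ N | r z < r y ∧ r y ≤ r x} := hmin z hzN hzx
    _ ≤ a * d := by gcongr
    _ = d * a := mul_comm a d

end Rank

section Layering

variable {V : Type} {α : Type*} [LinearOrder α] {G : SimpleGraph V} {r : V → α}
  {σ : V → Bool} {s : Bool} {m : ℕ} {a d e : ℝ} {C D W A B A' B' : Finset V}

/-- `C` is what is split off along a path of the cotree that leads from the root to the node
of `W`: the rank `r` counts how far down the path a vertex is split off, and the sign `σ` is the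
type of the node (`true` for join) at which this happens, hence tells the adjacency to everything
split off later and to `W`. Nothing is said about pairs of equal rank. -/
structure IsLayering (G : SimpleGraph V) (r : V → α) (σ : V → Bool) (C W : Finset V) : Prop where
  adj_iff : ∀ x ∈ C, ∀ y ∈ C, r x < r y → (G.Adj x y ↔ σ x = true)
  sign_eq : ∀ x ∈ C, ∀ y ∈ C, r x = r y → σ x = σ y
  adj_right_iff : ∀ x ∈ C, ∀ y ∈ W, (G.Adj x y ↔ σ x = true)

namespace IsLayering

lemma mono (h : IsLayering G r σ C W) (hD : D ⊆ C) : IsLayering G r σ D W where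
  adj_iff x hx y hy := h.adj_iff x (hD hx) y (hD hy)
  sign_eq x hx y hy := h.sign_eq x (hD hx) y (hD hy)
  adj_right_iff x hx := h.adj_right_iff x (hD hx)

lemma uniformTo_of_lt (h : IsLayering G r σ C W) (hA : A ⊆ C) (hB : B ⊆ C)
    (hs : ∀ x ∈ A, σ x = s) (hAB : ∀ x ∈ A, ∀ y ∈ B, r x < r y) : UniformTo G s A B :=
  fun x hx y hy => hs x hx ▸ h.adj_iff x (hA hx) y (hB hy) (hAB x hx y hy)

lemma isHomogeneous_right (h : IsLayering G r σ C W) (hA : A ⊆ C) (hs : ∀ x ∈ A, σ x = s) :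
    IsHomogeneous G A W :=
  ⟨s, fun x hx y hy => hs x hx ▸ h.adj_right_iff x (hA hx) y hy⟩

lemma isStaggered (h : IsLayering G r σ C W) (hA : A ⊆ C) (hB : B ⊆ C) (hs : ∀ x ∈ A, σ x = s)
    (hA' : A' ⊆ A) (hB' : B' ⊆ B) (hdA : d ≤ #A') (hdB : d ≤ #B')
    (hA'B : ∀ x ∈ A', ∀ y ∈ B, r x < r y) (hAB' : ∀ x ∈ A, ∀ y ∈ B', r x < r y) :
    IsStaggered G d A B :=
  ⟨s, A', hA', B', hB', hdA, hdB,
    h.uniformTo_of_lt (hA'.trans hA) hB (fun x hx => hs x (hA' hx)) hA'B,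
    (h.uniformTo_of_lt hA (hB'.trans hB) hs hAB').symm⟩

variable [DecidableEq V]

lemma exists_packing_of_minority (h : IsLayering G r σ C W) (ha : 0 ≤ a) (hm : #C ≤ m)
    (hs : (#{x ∈ C | σ x = !s} : ℝ) ≤ e) :
    ∃ P, IsMatchedPacking G m a d C (a + e) P ∧ ∀ A ∈ P, IsHomogeneous G A W := by
  set Cs := {x ∈ C | σ x = s}
  have hCs : Cs ⊆ C := filter_subset _ _
  obtain ⟨P, hPsub, hP⟩ := IsMatchedPacking.exists_subset_singleton (G := G) (d := d) ha
    ((card_le_card hCs).trans hm)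
  refine ⟨P, hP.expand hCs (le_trans ?_ hs), fun A hA => ?_⟩
  · gcongr
    intro x _
    have : σ x = !s ↔ σ x ≠ s := Bool.eq_not
    grind
  · obtain rfl := mem_singleton.1 (hPsub hA)
    exact h.isHomogeneous_right hCs fun x hx => (mem_filter.1 hx).2

lemma isMatchedPacking_of_cut {A₀ : Finset V} {t : α} {z : V} (h : IsLayering G r σ C W)
    (hm : #C ≤ m) (hA₀C : A₀ ⊆ C) (hA₀ : d ≤ #A₀) (hA₀s : ∀ x ∈ A₀, σ x = s)
    (hA₀r : ∀ x ∈ A₀, ∀ y ∈ C, σ y = !s → r x < r y) (hz : z ∈ C) (hzs : σ z = !s)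
    (hzt : r z ≤ t) (hzd : d ≤ #{x ∈ C | σ x = !s ∧ r z ≤ r x ∧ r x ≤ t}) :
    IsMatchedPacking G m 0 d
      ({x ∈ C | σ x = s ∧ r x ≤ r z} ∪ {x ∈ C | σ x = !s ∧ r x ≤ t} ∪ {x ∈ C | σ x = s ∧ t < r x})
      0 {{x ∈ C | σ x = s ∧ r x ≤ r z}, {x ∈ C | σ x = !s ∧ r x ≤ t},
        {x ∈ C | σ x = s ∧ t < r x}} := by
  set A := {x ∈ C | σ x = s ∧ r x ≤ r z}
  set N := {x ∈ C | σ x = !s ∧ r x ≤ t}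
  set X := {x ∈ C | σ x = s ∧ t < r x}
  have hAC : A ⊆ C := filter_subset _ _
  have hNC : N ⊆ C := filter_subset _ _
  have hXC : X ⊆ C := filter_subset _ _
  have card_le {D : Finset V} (hD : D ⊆ C) : #D ≤ m := (card_le_card hD).trans hm
  have hlt : ∀ x ∈ A, r x < r z := fun x hx => by
    have := h.sign_eq x (hAC hx) z hz
    grind
  have hstag : IsStaggered G d A N :=
    h.isStaggered hAC hNC (fun x hx => (mem_filter.1 hx).2.1) (A' := A₀) (by grind)
      (B' := {x ∈ C | σ x = !s ∧ r z ≤ r x ∧ r x ≤ t}) (by grind) hA₀ hzd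
      (fun x hx y hy => hA₀r x hx y (hNC hy) (mem_filter.1 hy).2.1)
      (fun x hx y hy => (hlt x hx).trans_le (mem_filter.1 hy).2.2.1)
  have hAX : IsHomogeneous G A X :=
    ⟨s, h.uniformTo_of_lt hAC hXC (by grind) (by grind)⟩
  have hNX : IsHomogeneous G N X :=
    ⟨!s, h.uniformTo_of_lt hNC hXC (by grind) (by grind)⟩
  have hAN : Disjoint A N := disjoint_filter.2 (by grind)
  have hANX : Disjoint (A ∪ N) X := disjoint_left.2 (by grind)
  have hpair := IsMatchedPacking.pair (a := 0) hAN (by simp) (card_le hAC) (by simp) (card_le hNC)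
    hstag
  have := hpair.union (.singleton (by simp) (card_le hXC)) hANX
    (by simpa using ⟨hAX, hNX⟩)
  simpa [insert_union] using this

lemma exists_packing_of_leading {A₀ : Finset V} (h : IsLayering G r σ C W) (hd : 0 < d)
    (hda : d ≤ a) (hdm : d * m ≤ a * a) (hm : #C ≤ m) (hA₀C : A₀ ⊆ C) (hA₀ : d ≤ #A₀)
    (hA₀s : ∀ x ∈ A₀, σ x = s) (hA₀r : ∀ x ∈ A₀, ∀ y ∈ C, σ y = !s → r x < r y) :
    ∃ P, IsMatchedPacking G m a d C (5 * a) P ∧ ∀ A ∈ P, IsHomogeneous G A W := by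
  have ha : 0 < a := hd.trans_le hda
  obtain hsmall | hlarge := lt_or_ge (#{x ∈ C | σ x = !s} : ℝ) (a + d)
  · obtain ⟨P, hP, hPW⟩ := h.exists_packing_of_minority (d := d) ha.le hm hsmall.le
    exact ⟨P, hP.mono (by linarith), hPW⟩
  have hmajority : d * #{x ∈ C | σ x = s} ≤ a * a := by
    refine le_trans ?_ hdm
    gcongr
    exact (card_filter_le _ _).trans hm
  obtain ⟨t, z, hz, hzt, habove, hzd, hbetween⟩ := exists_staggering_cut r hd ha hlarge hmajority
  simp only [filter_filter] at habove hzd hbetween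
  obtain ⟨hzC, hzs⟩ := mem_filter.1 hz
  have hcut := h.isMatchedPacking_of_cut hm hA₀C hA₀ hA₀s hA₀r hzC hzs hzt hzd
  set A := {x ∈ C | σ x = s ∧ r x ≤ r z}
  set N := {x ∈ C | σ x = !s ∧ r x ≤ t}
  set X := {x ∈ C | σ x = s ∧ t < r x}
  have hrest : (#(C \ (A ∪ N ∪ X)) : ℝ) ≤ a + a := by
    have hsub : C \ (A ∪ N ∪ X) ⊆
        {x ∈ C | σ x = !s ∧ t < r x} ∪ {x ∈ C | σ x = s ∧ r z < r x ∧ r x ≤ t} := by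
      intro x _
      have : σ x = !s ↔ σ x ≠ s := Bool.eq_not
      grind
    refine le_trans ?_ (add_le_add habove hbetween)
    exact_mod_cast (card_le_card hsub).trans (card_union_le _ _)
  refine ⟨_, ((hcut.expand (by grind) hrest).filter_le_card ha.le).mono ?_, ?_⟩
  · have : (#{A, N, X} : ℝ) ≤ 3 := mod_cast card_le_three
    nlinarith
  · intro B hB
    obtain rfl | rfl | rfl : B = A ∨ B = N ∨ B = X := by simpa using (mem_filter.1 hB).1
    all_goals exact h.isHomogeneous_right (filter_subset _ _) fun x hx => (mem_filter.1 hx).2.1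

lemma exists_packing (h : IsLayering G r σ C W) (hd : 0 < d) (hda : d ≤ a)
    (hdm : d * m ≤ a * a) (hm : #C ≤ m) :
    ∃ P, IsMatchedPacking G m a d C (6 * a) P ∧ ∀ A ∈ P, IsHomogeneous G A W := by
  have ha : 0 ≤ a := hd.le.trans hda
  by_cases hC : ∀ s, d ≤ #{x ∈ C | σ x = s}
  · obtain ⟨s, t, hlead, htrail⟩ := exists_leading_sign h.sign_eq hd hC
    set D := {x ∈ C | σ x = !s ∧ r x ≤ t}
    have hDC : C \ D ⊆ C := sdiff_subset
    obtain ⟨P, hP, hPW⟩ := (h.mono hDC).exists_packing_of_leading hd hda hdm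
      ((card_le_card hDC).trans hm) (A₀ := {x ∈ C | σ x = s ∧ r x ≤ t}) (s := s)
      (by grind) hlead (by grind) (by grind)
    refine ⟨P, (hP.expand hDC (L₂ := a) ?_).mono (by linarith), hPW⟩
    rw [Finset.sdiff_sdiff_eq_self (filter_subset _ _)]
    exact htrail.le.trans hda
  · obtain ⟨s, hs⟩ := not_forall.1 hC
    obtain ⟨P, hP, hPW⟩ := h.exists_packing_of_minority (s := !s) (d := d) ha hm
      (by simpa using (not_le.1 hs).le.trans hda)
    exact ⟨P, hP.mono (by linarith), hPW⟩

end IsLayering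

end Layering

section Peeling

variable {V : Type} [DecidableEq V] {G : SimpleGraph V} {m : ℕ} {a d L₁ L₂ : ℝ}
  {U C H₁ H₂ : Finset V} {P₁ P₂ : Finset (Finset V)}

/-- A partition of `U` obtained by following a path of the cotree down from the root: `C` is what
is split off along the path, and `H₁`, `H₂` are the two branches at its end, `H₂` being the
larger. -/
structure IsPeeling (G : SimpleGraph V) (U C H₁ H₂ : Finset V) : Prop where
  union_eq : C ∪ (H₁ ∪ H₂) = U
  disjoint : Disjoint C (H₁ ∪ H₂)
  disjoint_branches : Disjoint H₁ H₂
  card_le_card : #H₁ ≤ #H₂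
  isHomogeneous : IsHomogeneous G H₁ H₂
  exists_isLayering : ∃ (r : V → ℕ) (σ : V → Bool), IsLayering G r σ C (H₁ ∪ H₂)

lemma IsLayering.exists_extend {r : V → ℕ} {σ : V → Bool} (h : IsLayering G r σ C (H₁ ∪ H₂))
    (hh : IsHomogeneous G H₁ H₂) :
    ∃ (r' : V → ℕ) (σ' : V → Bool), IsLayering G r' σ' (C ∪ H₁) H₂ := by
  obtain ⟨s, hs⟩ := hh
  have hlt : ∀ x ∈ C, r x < C.sup r + 1 := fun x hx => Nat.lt_succ_of_le (le_sup hx)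
  have := h.adj_iff
  have := h.sign_eq
  have := h.adj_right_iff
  refine ⟨fun x => if x ∈ H₁ then C.sup r + 1 else r x, fun x => if x ∈ H₁ then s else σ x,
    ?_, ?_, ?_⟩
  · grind
  · grind
  · unfold UniformTo at hs
    grind

namespace IsPeeling

lemma card_add (h : IsPeeling G U C H₁ H₂) : #C + (#H₁ + #H₂) = #U := by
  rw [← h.union_eq, card_union_of_disjoint h.disjoint, card_union_of_disjoint h.disjoint_branches]

lemma exists_packing (h : IsPeeling G U C H₁ H₂) (hd : 0 < d) (hda : d ≤ a)
    (hdm : d * m ≤ a * a) (hC : #C ≤ m) (h₁ : IsMatchedPacking G m a d H₁ L₁ P₁)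
    (h₂ : IsMatchedPacking G m a d H₂ L₂ P₂) :
    ∃ P, IsMatchedPacking G m a d U (6 * a + (L₁ + L₂)) P := by
  obtain ⟨r, σ, hlayer⟩ := h.exists_isLayering
  obtain ⟨P, hP, hPH⟩ := hlayer.exists_packing hd hda hdm hC
  have h₁₂ := h₁.union h₂ h.disjoint_branches fun A hA B hB =>
    h.isHomogeneous.mono (h₁.subset A hA) (h₂.subset B hB)
  refine ⟨P ∪ (P₁ ∪ P₂), h.union_eq ▸ hP.union h₁₂ h.disjoint fun A hA B hB => ?_⟩
  exact (hPH A hA).mono subset_rfl (h₁₂.subset B hB)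

end IsPeeling

lemma Splits.exists_card_le (h : Splits G U) :
    ∃ H₁ H₂, H₁.Nonempty ∧ Disjoint H₁ H₂ ∧ H₁ ∪ H₂ = U ∧ #H₁ ≤ #H₂ ∧ IsHomogeneous G H₁ H₂ := by
  obtain ⟨X, hXU, hX, hUX, hh⟩ := h
  obtain hle | hle := le_total #X #(U \ X)
  · exact ⟨X, U \ X, hX, disjoint_sdiff, union_sdiff_of_subset hXU, hle, hh⟩
  · exact ⟨U \ X, X, hUX, sdiff_disjoint, sdiff_union_of_subset hXU, hle, hh.symm⟩

lemma IsCograph.exists_isPeeling (hG : IsCograph G) (hm : 0 < m) (hU : m < #U) :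
    ∃ C H₁ H₂, IsPeeling G U C H₁ H₂ ∧ #C ≤ m ∧ (m < #H₂ → m < #C + #H₁) := by
  classical
  obtain ⟨C, hC⟩ := Finset.exists_maximal
    (s := {C ∈ U.powerset | #C ≤ m ∧ m < #(U \ C) ∧
      ∃ (r : V → ℕ) (σ : V → Bool), IsLayering G r σ C (U \ C)})
    ⟨∅, by simpa using ⟨hU, 0, fun _ => true, by constructor <;> simp⟩⟩
  obtain ⟨hCU, hCm, hmU, r, σ, hlayer⟩ := by simpa using hC.prop
  obtain ⟨H₁, H₂, hH₁, hd, hH, hle, hh⟩ := (hG.splits (Nat.lt_of_le_of_lt hm hmU)).exists_card_le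
  have hCH : Disjoint C (H₁ ∪ H₂) := hH ▸ disjoint_sdiff
  have hunion : C ∪ (H₁ ∪ H₂) = U := hH ▸ union_sdiff_of_subset hCU
  rw [← hH] at hlayer
  refine ⟨C, H₁, H₂, ⟨hunion, hCH, hd, hle, hh, r, σ, hlayer⟩, hCm, fun hmH₂ => ?_⟩
  by_contra! hm₁
  have hCH₁ : Disjoint C H₁ := disjoint_of_subset_right subset_union_left hCH
  have hrest : U \ (C ∪ H₁) = H₂ := by
    rw [← sup_eq_union, ← sdiff_sdiff_left, ← hH, union_sdiff_cancel_left hd]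
  have hmem := hC.le_of_ge (y := C ∪ H₁)
    (by simpa [hrest, hmH₂, card_union_of_disjoint hCH₁, hm₁] using
      ⟨by grind, hlayer.exists_extend hh⟩) subset_union_left
  obtain ⟨x, hx⟩ := hH₁
  exact disjoint_left.1 hCH₁ (hmem (mem_union_right _ hx)) hx

lemma exists_le_mul_of_add_le_mul {x y k : ℕ} (hx : m < x) (hy : m < y) (hxy : x + y ≤ k * m) :
    ∃ i < k, ∃ j < k, x ≤ i * m ∧ y ≤ j * m ∧ i + j ≤ k + 1 := by
  have hm : 0 < m := Nat.pos_of_mul_pos_left (by omega : 0 < k * m)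
  have hq : (x - 1) / m * m ≤ x - 1 := Nat.div_mul_le_self _ _
  have hq' : x - 1 < ((x - 1) / m + 1) * m := Nat.lt_mul_of_div_lt (Nat.lt_succ_self _) hm
  have hq₀ : 0 < (x - 1) / m := Nat.div_pos (by omega) hm
  set q := (x - 1) / m
  have hqk : q + 1 < k := by
    by_contra! h
    have := Nat.mul_le_mul_right m h
    rw [add_mul] at this
    omega
  have hsplit : q * m + (k - q) * m = k * m := by rw [← add_mul]; congr 1; omega
  exact ⟨q + 1, hqk, k - q, by omega, by omega, by omega, by omega⟩

theorem IsCograph.exists_packing (hG : IsCograph G) (hd : 0 < d) (hda : d ≤ a)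
    (hdm : d * m ≤ a * a) {k : ℕ} (hU : m < #U) (hk : #U ≤ k * m) :
    ∃ P, IsMatchedPacking G m a d U ((2 * k - 3) * (10 * a)) P := by
  have ha : 0 < a := hd.trans_le hda
  have hm : 0 < m := Nat.pos_of_mul_pos_left (by omega : 0 < k * m)
  induction k using Nat.strong_induction_on generalizing U with
  | h k ih =>
    obtain ⟨C, H₁, H₂, hpeel, hCm, hmH₁⟩ := hG.exists_isPeeling hm hU
    have hcard := hpeel.card_add
    have small {H : Finset V} (hH : #H ≤ m) : ∃ P, IsMatchedPacking G m a d H a P :=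
      let ⟨P, _, hP⟩ := IsMatchedPacking.exists_subset_singleton ha.le hH
      ⟨P, hP⟩
    obtain hH₂ | hH₂ := le_or_gt #H₂ m
    · obtain ⟨P₁, h₁⟩ := small (hpeel.card_le_card.trans hH₂)
      obtain ⟨P₂, h₂⟩ := small hH₂
      obtain ⟨P, hP⟩ := hpeel.exists_packing hd hda hdm hCm h₁ h₂
      have hk2 : (2 : ℝ) ≤ k := by
        have : 1 < k := by nlinarith
        exact_mod_cast this
      exact ⟨P, hP.mono (by nlinarith)⟩
    obtain hH₁ | hH₁ := le_or_gt #H₁ m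
    · obtain ⟨j, rfl⟩ : ∃ j, k = j + 1 := Nat.exists_eq_succ_of_ne_zero (by rintro rfl; omega)
      rw [add_one_mul] at hk
      obtain ⟨P₁, h₁⟩ := small hH₁
      obtain ⟨P₂, h₂⟩ := ih j (by omega) hH₂ (by have := hmH₁ hH₂; omega)
      obtain ⟨P, hP⟩ := hpeel.exists_packing hd hda hdm hCm h₁ h₂
      exact ⟨P, hP.mono (by push_cast; linarith)⟩
    · obtain ⟨i, hi, j, hj, hHi, hHj, hij⟩ :=
        exists_le_mul_of_add_le_mul hH₁ hH₂ (by omega : #H₁ + #H₂ ≤ k * m)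
      obtain ⟨P₁, h₁⟩ := ih i hi hH₁ hHi
      obtain ⟨P₂, h₂⟩ := ih j hj hH₂ hHj
      obtain ⟨P, hP⟩ := hpeel.exists_packing hd hda hdm hCm h₁ h₂
      have hij' : (i + j : ℝ) ≤ k + 1 := mod_cast hij
      exact ⟨P, hP.mono (by nlinarith)⟩

end Peeling

section Partition

lemma endpoints_ne_of_matching {ι : Type*} [Preorder ι] {R : ι → ι → Prop}
    (hsymm : ∀ i j, R i j → R j i) (hR : ∀ i j k, i ≠ j → i ≠ k → R i j → R i k → j = k)
    {p q : ι × ι} (hp : p.1 < p.2) (hpR : R p.1 p.2) (hq : q.1 < q.2) (hqR : R q.1 q.2)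
    (hpq : p ≠ q) : p.1 ≠ q.1 ∧ p.1 ≠ q.2 ∧ p.2 ≠ q.1 ∧ p.2 ≠ q.2 := by
  obtain ⟨i, j⟩ := p
  obtain ⟨k, l⟩ := q
  have hji := hsymm _ _ hpR
  have hlk := hsymm _ _ hqR
  refine ⟨?_, ?_, ?_, ?_⟩ <;> rintro rfl
  · exact hpq (congrArg _ (hR _ _ _ hp.ne hq.ne hpR hqR))
  · exact (hR _ _ _ hp.ne hq.ne' hpR hlk ▸ hp).asymm hq
  · exact (hR _ _ _ hp.ne' hq.ne hji hqR ▸ hp).asymm hq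
  · exact hpq (congrArg (·, j) (hR _ _ _ hp.ne' hq.ne' hji hlk))

lemma le_natCeil_div_mul {m : ℕ} (hm : 0 < m) (n : ℕ) : n ≤ ⌈(n / m : ℝ)⌉₊ * m := by
  have hm' : (0 : ℝ) < m := mod_cast hm
  exact_mod_cast (div_le_iff₀ hm').1 (Nat.le_ceil (n / m : ℝ))

lemma ceil_div_sub_one_mul_le {m : ℝ} (hm : 0 < m) (n : ℝ) : ((⌈n / m⌉ : ℝ) - 1) * m ≤ n := by
  rw [← le_div_iff₀ hm, sub_le_iff_le_add]
  exact (Int.ceil_lt_add_one _).le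

lemma exists_injective_image_univ_eq {α : Type*} [DecidableEq α] (P : Finset α) :
    ∃ (t : ℕ) (f : Fin t → α), f.Injective ∧ univ.image f = P := by
  refine ⟨#P, fun i => P.equivFin.symm i, Subtype.val_injective.comp P.equivFin.symm.injective, ?_⟩
  ext x
  simp only [mem_image, mem_univ, true_and]
  exact ⟨fun ⟨i, hi⟩ => hi ▸ (P.equivFin.symm i).2, fun hx => ⟨P.equivFin ⟨x, hx⟩, by simp⟩⟩

theorem cograph_partition_general {V : Type} [Fintype V] [DecidableEq V]
    (G : SimpleGraph V) (hG : IsCograph G)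
    (m : ℕ) (hm : 1 ≤ m) (hmn : m < Fintype.card V)
    (β : ℝ) (hβ0 : 0 < β) (hβ1 : β ≤ 1) (δ : ℝ) (hδ : δ ≤ β ^ 2 * m) :
    ∃ (t : ℕ) (S : Finset V) (Vp : Fin t → Finset V) (M : Finset (Fin t × Fin t)),
      (∀ i, Disjoint S (Vp i)) ∧
      (∀ i j, i ≠ j → Disjoint (Vp i) (Vp j)) ∧
      (S ∪ (Finset.univ : Finset (Fin t)).biUnion Vp = Finset.univ) ∧
      (∀ p ∈ M, p.1 < p.2) ∧
      (∀ p ∈ M, ∀ q ∈ M, p ≠ q →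
        p.1 ≠ q.1 ∧ p.1 ≠ q.2 ∧ p.2 ≠ q.1 ∧ p.2 ≠ q.2) ∧
      ((S.card : ℝ) ≤ (2 * (⌈(Fintype.card V : ℝ) / (m : ℝ)⌉ : ℝ) - 3) * (10 * β * m)) ∧
      ((2 * (⌈(Fintype.card V : ℝ) / (m : ℝ)⌉ : ℝ) - 3) * (10 * β * m)
        ≤ 20 * β * (Fintype.card V : ℝ)) ∧
      (∀ i, β * m ≤ ((Vp i).card : ℝ) ∧ ((Vp i).card : ℝ) ≤ (m : ℝ)) ∧
      (∀ i j : Fin t, i < j → (i, j) ∉ M →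
        CompleteTo G (Vp i) (Vp j) ∨ EmptyTo G (Vp i) (Vp j)) ∧
      (∀ p ∈ M, ∃ Vi' ⊆ Vp p.1, ∃ Vj' ⊆ Vp p.2,
        δ ≤ (Vi'.card : ℝ) ∧ δ ≤ (Vj'.card : ℝ) ∧
        ((CompleteTo G Vi' (Vp p.2) ∧ CompleteTo G Vj' (Vp p.1)) ∨
         (EmptyTo G Vi' (Vp p.2) ∧ EmptyTo G Vj' (Vp p.1)))) := by
  classical
  have hm0 : (0 : ℝ) < m := mod_cast hm
  obtain ⟨P, hP⟩ := hG.exists_packing (U := univ) (m := m) (a := β * m) (d := β ^ 2 * m)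
    (by positivity) (by gcongr; exact pow_le_of_le_one hβ0.le hβ1 two_ne_zero)
    (by linarith) hmn (le_natCeil_div_mul hm _)
  have hceil : ((⌈(Fintype.card V / m : ℝ)⌉₊ : ℕ) : ℝ) = ⌈(Fintype.card V / m : ℝ)⌉ :=
    natCast_ceil_eq_intCast_ceil (by positivity)
  obtain ⟨t, Vp, hVp, rfl⟩ := exists_injective_image_univ_eq P
  have mem (i : Fin t) : Vp i ∈ univ.image Vp := mem_image_of_mem _ (mem_univ i)
  have hleft := hP.card_leftover_le
  rw [card_univ, hceil, image_biUnion, ← mul_assoc 10] at hleft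
  refine ⟨t, univ \ univ.biUnion Vp, Vp,
    univ.filter fun p : Fin t × Fin t => p.1 < p.2 ∧ ¬ IsHomogeneous G (Vp p.1) (Vp p.2),
    fun i => disjoint_of_subset_right (subset_biUnion_of_mem Vp (mem_univ i)) sdiff_disjoint,
    fun i j hij => hP.disjoint _ (mem i) _ (mem j) (hVp.ne hij),
    sdiff_union_of_subset (subset_univ _), by simp +contextual, ?_, hleft, ?_,
    fun i => ⟨hP.le_card _ (mem i), mod_cast hP.card_le _ (mem i)⟩, ?_, ?_⟩
  · simp only [mem_filter, mem_univ, true_and]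
    rintro p ⟨hp, hpG⟩ q ⟨hq, hqG⟩ hpq
    refine endpoints_ne_of_matching (R := fun i j => ¬ IsHomogeneous G (Vp i) (Vp j))
      (fun i j => mt IsHomogeneous.symm) (fun i j k hij hik hj hk => ?_) hp hpG hq hqG hpq
    exact hVp (hP.matching _ (mem i) _ (mem j) _ (mem k) (hVp.ne hij) (hVp.ne hik) hj hk)
  · nlinarith [mul_le_mul_of_nonneg_left (ceil_div_sub_one_mul_le hm0 (Fintype.card V)) hβ0.le]
  · intro i j hij hM
    exact isHomogeneous_iff.1 (by simpa [hij] using hM)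
  · intro p hp
    obtain ⟨hlt, hG⟩ := (mem_filter.1 hp).2
    exact (hP.staggered _ (mem _) _ (mem _) (hVp.ne hlt.ne) hG).exists_completeTo_or_emptyTo hδ

end Partition

/-- Cograph partition lemma: every cograph has a partition `S ∪ V₁ ∪ ⋯ ∪ V_t` in which all
pairs of parts outside a matching `M` are homogeneous, and matched pairs carry the extra
structure in item (4). -/
theorem cograph_partition {V : Type} [Fintype V] [DecidableEq V]
    (G : SimpleGraph V) (hG : IsCograph G)
    (m : ℕ) (hm : 1 ≤ m) (hmn : m < Fintype.card V)
    (β : ℝ) (hβ0 : 0 < β) (hβ1 : β < 1) :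
    ∃ (t : ℕ) (S : Finset V) (Vp : Fin t → Finset V) (M : Finset (Fin t × Fin t)),
      -- the sets form a partition of V(G)
      (∀ i, Disjoint S (Vp i)) ∧
      (∀ i j, i ≠ j → Disjoint (Vp i) (Vp j)) ∧
      (S ∪ (Finset.univ : Finset (Fin t)).biUnion Vp = Finset.univ) ∧
      -- M is a set of pairs {i,j} with i < j forming a matching
      (∀ p ∈ M, p.1 < p.2) ∧
      (∀ p ∈ M, ∀ q ∈ M, p ≠ q →
        p.1 ≠ q.1 ∧ p.1 ≠ q.2 ∧ p.2 ≠ q.1 ∧ p.2 ≠ q.2) ∧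
      -- (1)
      ((S.card : ℝ) ≤ (2 * (⌈(Fintype.card V : ℝ) / (m : ℝ)⌉ : ℝ) - 3) * (10 * β * m)) ∧
      ((2 * (⌈(Fintype.card V : ℝ) / (m : ℝ)⌉ : ℝ) - 3) * (10 * β * m)
        ≤ 20 * β * (Fintype.card V : ℝ)) ∧
      -- (2)
      (∀ i, β * m ≤ ((Vp i).card : ℝ) ∧ ((Vp i).card : ℝ) ≤ (m : ℝ)) ∧
      -- (3)
      (∀ i j : Fin t, i < j → (i, j) ∉ M →
        CompleteTo G (Vp i) (Vp j) ∨ EmptyTo G (Vp i) (Vp j)) ∧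
      -- (4)
      (∀ p ∈ M, ∃ Vi' ⊆ Vp p.1, ∃ Vj' ⊆ Vp p.2,
        β ^ 3 * m / 2 ≤ (Vi'.card : ℝ) ∧ β ^ 3 * m / 2 ≤ (Vj'.card : ℝ) ∧
        ((CompleteTo G Vi' (Vp p.2) ∧ CompleteTo G Vj' (Vp p.1)) ∨
         (EmptyTo G Vi' (Vp p.2) ∧ EmptyTo G Vj' (Vp p.1)))) :=
  cograph_partition_general G hG m hm hmn β hβ0 hβ1.le _ (by
    nlinarith [mul_pos (pow_pos hβ0 2) (Nat.cast_pos (α := ℝ).2 hm)])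
end
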